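/- For every positive integer m, every standard index-m form φ with finite part Φ := φ − A_{2,m}, and every unordered factorization m = m₁·m₂, one has R_{m₁,m₂}(Φ) = (m₁ + m₂)/12. -/

import Mathlib

noncomputable section

open Complex Filter Topology MeasureTheory
open scoped Classical

/-- `ee x = e^{2πix}`. -/
def ee (x : ℂ) : ℂ := Complex.exp (2 * (Real.pi : ℂ) * Complex.I * x)

/-- The index-`m` elliptic transformation law on `ℍ × ℂ`. -/
def EllipticLaw (m : ℕ) (φ : ℂ → ℂ → ℂ) : Prop :=
  ∀ τ : ℂ, 0 < τ.im → ∀ z : ℂ, ∀ lam mu : ℤ,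
    φ τ (z + (lam : ℂ) * τ + (mu : ℂ)) =
      ee (-(m : ℂ) * ((lam : ℂ) ^ 2 * τ + 2 * (lam : ℂ) * z)) * φ τ z

/-- The weight-`k` index-`m` modular transformation law on `ℍ × ℂ`. -/
def ModularLaw (k : ℤ) (m : ℕ) (φ : ℂ → ℂ → ℂ) : Prop :=
  ∀ τ : ℂ, 0 < τ.im → ∀ z : ℂ, ∀ a b c d : ℤ, a * d - b * c = 1 →
    φ (((a : ℂ) * τ + (b : ℂ)) / ((c : ℂ) * τ + (d : ℂ))) (z / ((c : ℂ) * τ + (d : ℂ))) =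
      ((c : ℂ) * τ + (d : ℂ)) ^ k *
        ee ((m : ℂ) * (c : ℂ) * z ^ 2 / ((c : ℂ) * τ + (d : ℂ))) * φ τ z

/-- The theta function `θ_{m,ℓ}(τ,z) = ∑_{r ≡ ℓ (mod 2m)} q^{r²/4m} y^r`. -/
def jTheta (m : ℕ) (l : ℤ) (τ z : ℂ) : ℂ :=
  ∑' n : ℤ, ee (((l : ℂ) + 2 * (m : ℂ) * (n : ℂ)) ^ 2 / (4 * (m : ℂ)) * τ +
      ((l : ℂ) + 2 * (m : ℂ) * (n : ℂ)) * z)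

/-- The point `z_s = ατ + β` for `s = (α,β) ∈ ℚ²`. -/
def zpt (s : ℚ × ℚ) (τ : ℂ) : ℂ := (s.1 : ℚ) * τ + (s.2 : ℚ)

/-- The Appell–Lerch sum `A_{2,m}(τ,z) = ∑_{s∈ℤ} q^{ms²+s}·y^{2ms+1}/(1-q^s y)²`. -/
def A2sum (m : ℕ) (τ z : ℂ) : ℂ :=
  ∑' s : ℤ, ee (((m : ℂ) * (s : ℂ) ^ 2 + (s : ℂ)) * τ + (2 * (m : ℂ) * (s : ℂ) + 1) * z) /
      (1 - ee ((s : ℂ) * τ + z)) ^ 2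

/-- A standard index-`m` form: a function on `ℍ × ℂ` satisfying the weight-2 index-`m`
modular law and the index-`m` elliptic law, holomorphic away from `z ∈ ℤτ + ℤ`, and such
that `z ↦ φ(τ,z) - (2πiz)^{-2}` extends holomorphically across `z = 0`. -/
def IsStandardForm (m : ℕ) (φ : ℂ → ℂ → ℂ) : Prop :=
  ModularLaw 2 m φ ∧ EllipticLaw m φ ∧
  (∀ τ : ℂ, 0 < τ.im → ∀ z : ℂ, (∀ lam mu : ℤ, z ≠ (lam : ℂ) * τ + (mu : ℂ)) →
    DifferentiableAt ℂ (fun p : ℂ × ℂ => φ p.1 p.2) (τ, z)) ∧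
  (∀ τ : ℂ, 0 < τ.im → ∃ g : ℂ → ℂ, AnalyticAt ℂ g 0 ∧
    ∀ᶠ z in 𝓝[≠] (0 : ℂ), φ τ z - 1 / (2 * (Real.pi : ℂ) * Complex.I * z) ^ 2 = g z)

/-- `C` is the Fourier coefficient data of the finite part `Φ = φ - A_{2,m}` of the
standard index-`m` form `φ`. -/
def IsFinitePartCoeffs (m : ℕ) (φ : ℂ → ℂ → ℂ) (C : ℤ → ℤ → ℂ) : Prop :=
  (∀ Δ l : ℤ, C Δ (l + 2 * (m : ℤ)) = C Δ l) ∧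
  (∀ Δ l : ℤ, ¬ (4 * (m : ℤ)) ∣ (Δ + l ^ 2) → C Δ l = 0) ∧
  (∀ τ : ℂ, 0 < τ.im → ∀ z : ℂ, (∀ lam mu : ℤ, z ≠ (lam : ℂ) * τ + (mu : ℂ)) →
    HasSum (fun p : ℤ × ℤ => C (4 * (m : ℤ) * p.1 - p.2 ^ 2) p.2 *
      ee ((p.1 : ℂ) * τ + (p.2 : ℂ) * z)) (φ τ z - A2sum m τ z))

/-- A representative `ℓ* = ℓ·(a·x - b·y)` (with `ax + by = gcd(a,b) = 1`) of the residue
class determined by `ℓ* ≡ -ℓ (mod 2a)`, `ℓ* ≡ ℓ (mod 2b)`, used to define the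
Atkin–Lehner involution `W_a` on coefficients. -/
def lstar (a b : ℕ) (l : ℤ) : ℤ := l * ((a : ℤ) * Nat.gcdA a b - (b : ℤ) * Nat.gcdB a b)

/-- The coefficients of `φ|u_t` (index `m/t²`):
`C_{φ|u_t}(Δ,ℓ) = ∑_{r mod 2m/t, r ≡ ℓ (mod 2m/t²)} C_φ(Δt², rt)`. -/
def CoeffU (m t : ℕ) (C : ℤ → ℤ → ℂ) (Δ l : ℤ) : ℂ :=
  ∑ j ∈ Finset.range t,
    C (Δ * (t : ℤ) ^ 2) ((l + 2 * (m : ℤ) / (t : ℤ) ^ 2 * (j : ℤ)) * (t : ℤ))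

/-- For an unordered factorization `m = m₁·m₂` with `t = gcd(m₁,m₂)`,
`R_{m₁,m₂}(φ) = R[(φ|u_t)|W_{m₁/t}] = ∑_{r∈ℤ} C_{(φ|u_t)|W_{m₁/t}}(-r², r)`. -/
def Rfactor (m : ℕ) (C : ℤ → ℤ → ℂ) (m₁ m₂ : ℕ) : ℂ :=
  ∑' r : ℤ, CoeffU m (Nat.gcd m₁ m₂) C (-(r ^ 2))
      (lstar (m₁ / Nat.gcd m₁ m₂) (m₂ / Nat.gcd m₁ m₂) r)


lemma ee_add (x y : ℂ) : ee (x + y) = ee x * ee y := by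
  unfold ee; rw [← Complex.exp_add]; ring_nf

lemma ee_int (n : ℤ) : ee (n : ℂ) = 1 := by
  unfold ee
  rw [show 2 * (Real.pi : ℂ) * Complex.I * (n : ℂ) = n * (2 * Real.pi * Complex.I) by ring]
  exact Complex.exp_int_mul_two_pi_mul_I n

lemma ee_zero : ee 0 = 1 := by simp [ee]

lemma ee_add_int (x : ℂ) (n : ℤ) : ee (x + n) = ee x := by
  rw [ee_add, ee_int, mul_one]

lemma ee_neg (x : ℂ) : ee (-x) = (ee x)⁻¹ := by
  unfold ee; rw [← Complex.exp_neg]; ring_nf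

lemma ee_ne_zero (x : ℂ) : ee x ≠ 0 := Complex.exp_ne_zero _

lemma ee_nat_mul (n : ℕ) (x : ℂ) : ee (n * x) = ee x ^ n := by
  unfold ee; rw [← Complex.exp_nat_mul]; ring_nf

lemma norm_ee (x : ℂ) : ‖ee x‖ = Real.exp (-(2 * Real.pi * x.im)) := by
  unfold ee; rw [Complex.norm_exp]; congr 1; simp

lemma ee_eq_one_iff (x : ℂ) : ee x = 1 ↔ ∃ n : ℤ, x = n := by
  unfold ee
  rw [Complex.exp_eq_one_iff]
  constructor
  · rintro ⟨n, hn⟩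
    refine ⟨n, ?_⟩
    have h := Complex.two_pi_I_ne_zero
    apply mul_left_cancel₀ h
    rw [hn]; ring
  · rintro ⟨n, rfl⟩
    exact ⟨n, by ring⟩

lemma ee_differentiable : Differentiable ℂ ee := by
  unfold ee; fun_prop

lemma ee_continuous : Continuous ee := ee_differentiable.continuous

/-- Core contour lemma. -/
lemma core_integral (f : ℂ → ℂ) (κ : ℂ)
    (hd : DifferentiableOn ℂ f {τ : ℂ | 1/2 < τ.im ∧ τ.im < 2})
    (hS : ∀ τ : ℂ, 0 < τ.im → f (-1/τ) = τ^2 * f τ + κ * τ) :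
    ∫ x in (-(1/2 : ℝ))..(1/2), f (x + (Real.sqrt 3 / 2 : ℝ) * Complex.I) = κ * Real.pi * Complex.I / 6 := by
  set B := Metric.ball (5/4 * Complex.I) (3/4 : ℝ) with hB
  have memB : ∀ τ : ℂ, τ ∈ B ↔ τ.re^2 + τ.im^2 + 1 < 5/2 * τ.im := by
    intro τ
    rw [hB, Metric.mem_ball, dist_eq_norm, ← sq_lt_sq₀ (norm_nonneg _) (by norm_num), ← Complex.normSq_eq_norm_sq, Complex.normSq_apply]
    simp
    constructor <;> intro h <;> nlinarith
  have imB : ∀ τ ∈ B, 1/2 < τ.im ∧ τ.im < 2 := by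
    intro τ h
    rw [memB] at h
    constructor <;> nlinarith [sq_nonneg τ.re]
  have hsB : ∀ τ ∈ B, -1/τ ∈ B := by
    intro τ h
    have h1 := imB τ h
    rw [memB] at h ⊢
    have hn : 0 < Complex.normSq τ := by rw [Complex.normSq_apply]; nlinarith [sq_nonneg τ.re]
    have e1 : (-1/τ).re = -τ.re / Complex.normSq τ := by
      rw [neg_div, one_div]; simp [neg_div]
    have e2 : (-1/τ).im = τ.im / Complex.normSq τ := by
      rw [neg_div, one_div]; simp [neg_div]
    rw [e1, e2]
    have e3 : (-τ.re / Complex.normSq τ)^2 + (τ.im / Complex.normSq τ)^2 = 1 / Complex.normSq τ := by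
      field_simp; rw [Complex.normSq_apply]; ring
    rw [e3]
    rw [show 5/2 * (τ.im / Complex.normSq τ) = (5/2 * τ.im) / Complex.normSq τ by ring, div_add_one hn.ne']
    apply div_lt_div_of_pos_right _ hn
    rw [Complex.normSq_apply]; nlinarith
  obtain ⟨G, hG⟩ := DifferentiableOn.isExactOn_ball (f := f) (c := 5/4 * Complex.I) (r := 3/4)
    (hd.mono (fun τ h => imB τ h))
  have hG : ∀ τ ∈ B, HasDerivAt G (f τ) τ := hG
  have hne : ∀ τ ∈ B, τ ≠ 0 := by
    intro τ h h0; have := (imB τ h).1; simp [h0] at this; linarith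
  -- constant function
  set L : ℂ → ℂ := fun τ => G (-1/τ) - G τ - κ * Complex.log τ with hL
  have hLd : ∀ τ ∈ B, HasDerivAt L 0 τ := by
    intro τ h
    have h0 := hne τ h
    have d1 : HasDerivAt (fun τ : ℂ => -1/τ) (1/τ^2) τ := by
      have := (hasDerivAt_inv h0).neg
      have e : (fun τ : ℂ => -1/τ) = -fun y : ℂ => y⁻¹ := by
        funext x; simp [neg_div]
      rw [e]
      rw [neg_neg, ← one_div] at this
      exact this
    have d2 := (hG _ (hsB τ h)).comp τ d1
    have d3 := (Complex.hasDerivAt_log (z := τ) (Or.inr (by have := (imB τ h).1; linarith))).const_mul κ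
    have := (d2.sub (hG τ h)).sub d3
    have e0 : f (-1 / τ) * (1 / τ ^ 2) - f τ - κ * τ⁻¹ = 0 := by
      rw [hS τ (by have := (imB τ h).1; linarith)]
      field_simp; ring
    rw [e0] at this
    exact this
  have hconst : ∀ x ∈ B, ∀ y ∈ B, L x = L y := by
    intro x hx y hy
    have hcv : Convex ℝ B := convex_ball _ _
    have := hcv.norm_image_sub_le_of_norm_hasDerivWithin_le (f := L) (f' := fun _ => 0) (C := 0)
      (fun z hz => (hLd z hz).hasDerivWithinAt) (by simp) hx hy
    simp at this
    exact (sub_eq_zero.mp this).symm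
  have s3 : Real.sqrt 3 ^ 2 = 3 := Real.sq_sqrt (by norm_num)
  have s3' : 1.7 < Real.sqrt 3 := by
    rw [Real.lt_sqrt (by norm_num)]; norm_num
  set ρ : ℂ := ((1/2 : ℝ) : ℂ) + (Real.sqrt 3 / 2 : ℝ) * Complex.I with hρ
  have seg : ∀ x ∈ Set.uIcc (-(1/2:ℝ)) (1/2), (x : ℂ) + (Real.sqrt 3 / 2 : ℝ) * Complex.I ∈ B := by
    intro x hx
    rw [Set.uIcc_of_le (by norm_num)] at hx
    rw [memB]
    have : x^2 ≤ 1/4 := by nlinarith [hx.1, hx.2]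
    simp
    nlinarith
  have hI : Complex.I ∈ B := by rw [memB]; simp; norm_num
  have hρB : ρ ∈ B := seg (1/2) (by rw [Set.uIcc_of_le (by norm_num)]; constructor <;> norm_num)
  have hft : ∫ x in (-(1/2 : ℝ))..(1/2), f (x + (Real.sqrt 3 / 2 : ℝ) * Complex.I)
      = G (((1/2:ℝ):ℂ) + (Real.sqrt 3 / 2 : ℝ) * Complex.I) - G (((-(1/2):ℝ):ℂ) + (Real.sqrt 3 / 2 : ℝ) * Complex.I) := by
    apply intervalIntegral.integral_eq_sub_of_hasDerivAt (f := fun x : ℝ => G (x + (Real.sqrt 3 / 2 : ℝ) * Complex.I))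
    · intro x hx
      have h1 := hG _ (seg x hx)
      have h2 : HasDerivAt (fun x : ℝ => (x : ℂ) + (Real.sqrt 3 / 2 : ℝ) * Complex.I) 1 x :=
        (Complex.ofRealCLM.hasDerivAt (x := x)).add_const _
      have := HasDerivAt.comp (𝕜 := ℝ) (𝕜' := ℂ) x h1 h2
      rw [mul_one] at this
      exact this
    · apply ContinuousOn.intervalIntegrable
      apply ContinuousOn.comp (t := B) (hd.continuousOn.mono (fun τ h => imB τ h)) (by fun_prop) seg
  have hSρ : -1/ρ = ((-(1/2):ℝ):ℂ) + (Real.sqrt 3 / 2 : ℝ) * Complex.I := by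
    rw [div_eq_iff (hne ρ hρB), hρ]
    apply Complex.ext
    · simp; nlinarith
    · simp; ring
  have hSI : -1/Complex.I = Complex.I := by
    rw [div_eq_iff Complex.I_ne_zero]; simp
  have hlog : Complex.log ρ = Real.pi / 3 * Complex.I := by
    have : ρ = Complex.exp (((Real.pi / 3 : ℝ) : ℂ) * Complex.I) := by
      rw [Complex.exp_mul_I, ← Complex.ofReal_cos, ← Complex.ofReal_sin, Real.cos_pi_div_three, Real.sin_pi_div_three]
    rw [this, Complex.log_exp]
    · push_cast; ring
    · simp; linarith [Real.pi_pos]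
    · simp; linarith [Real.pi_pos]
  have key := hconst ρ hρB Complex.I hI
  simp only [hL] at key
  rw [hSρ, hSI, hlog, Complex.log_I] at key
  rw [hft]
  linear_combination -key

lemma orth (n : ℤ) (y : ℝ) :
    ∫ x in (-(1/2 : ℝ))..(1/2), ee ((n:ℂ) * (x + y * Complex.I)) = if n = 0 then 1 else 0 := by
  split_ifs with h
  · subst h; simp [ee_zero]; norm_num
  · have hc : (2 * (Real.pi : ℂ) * Complex.I * n) ≠ 0 :=
      mul_ne_zero Complex.two_pi_I_ne_zero (by exact_mod_cast h)
    have e : ∀ x : ℝ, ee ((n:ℂ) * (x + y * Complex.I)) =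
        Complex.exp ((2 * (Real.pi : ℂ) * Complex.I * n) * x) * ee (n * (y * Complex.I)) := by
      intro x; rw [mul_add, ee_add]; congr 1; unfold ee; ring_nf
    simp_rw [e]
    rw [intervalIntegral.integral_mul_const, integral_exp_mul_complex hc]
    have : Complex.exp ((2 * (Real.pi : ℂ) * Complex.I * n) * ((1/2 : ℝ):ℂ)) =
        Complex.exp ((2 * (Real.pi : ℂ) * Complex.I * n) * ((-(1/2) : ℝ):ℂ)) := by
      rw [Complex.exp_eq_exp_iff_exists_int]
      refine ⟨n, ?_⟩
      push_cast; ring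
    rw [this]; simp

lemma norm_ee_mul (n : ℤ) (τ : ℂ) : ‖ee ((n:ℂ) * τ)‖ = Real.exp (-(2 * Real.pi * (n * τ.im))) := by
  rw [norm_ee]; simp

lemma fourier_integral {ι : Type*} [Countable ι] (a : ι → ℂ) (n : ι → ℤ) (y : ℝ)
    (hs : Summable fun i => ‖a i * ee ((n i : ℂ) * (y * Complex.I))‖) :
    ∫ x in (-(1/2 : ℝ))..(1/2), ∑' i, a i * ee ((n i : ℂ) * (x + y * Complex.I)) =
      ∑' i, if n i = 0 then a i else 0 := by
  have h := intervalIntegral.hasSum_integral_of_dominated_convergence (μ := volume) (ι := ι) (a := -(1/2 : ℝ)) (b := 1/2)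
    (F := fun i (x : ℝ) => a i * ee ((n i : ℂ) * (x + y * Complex.I)))
    (f := fun x : ℝ => ∑' i, a i * ee ((n i : ℂ) * (x + y * Complex.I)))
    (fun i _ => ‖a i * ee ((n i : ℂ) * (y * Complex.I))‖)
    (fun i => by
      apply Continuous.aestronglyMeasurable
      have := ee_continuous
      fun_prop)
    (fun i => by
      filter_upwards with x _
      rw [norm_mul, norm_mul, norm_ee_mul, norm_ee_mul]; simp)
    (by filter_upwards with x _; exact hs)
    (by simp)
    (by
      filter_upwards with x _
      apply Summable.hasSum
      apply Summable.of_norm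
      refine hs.congr fun i => ?_
      rw [norm_mul, norm_mul, norm_ee_mul, norm_ee_mul]; simp)
  rw [← h.tsum_eq]
  congr 1; ext i
  rw [intervalIntegral.integral_const_mul, orth]
  split_ifs <;> simp

lemma series_diff {ι : Type*} (a : ι → ℂ) (n : ι → ℤ) (y₁ y₂ : ℝ)
    (h₁ : Summable fun i => ‖a i * ee ((n i : ℂ) * (y₁ * Complex.I))‖)
    (h₂ : Summable fun i => ‖a i * ee ((n i : ℂ) * (y₂ * Complex.I))‖) :
    DifferentiableOn ℂ (fun τ => ∑' i, a i * ee ((n i : ℂ) * τ)) {τ : ℂ | y₁ < τ.im ∧ τ.im < y₂} := by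
  apply differentiableOn_tsum_of_summable_norm (h₁.add h₂)
  · intro i
    have := ee_differentiable
    fun_prop
  · exact (isOpen_lt continuous_const Complex.continuous_im).inter (isOpen_lt Complex.continuous_im continuous_const)
  · rintro i w ⟨hw1, hw2⟩
    rw [norm_mul, norm_mul, norm_mul, norm_ee_mul, norm_ee_mul, norm_ee_mul, ← mul_add]
    apply mul_le_mul_of_nonneg_left _ (norm_nonneg _)
    simp only [Complex.mul_im, Complex.ofReal_re, Complex.I_im, Complex.ofReal_im, Complex.I_re, mul_one, mul_zero, add_zero]
    have hp := Real.pi_pos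
    rcases le_total 0 (n i) with h | h
    · have h' : (0:ℝ) ≤ n i := by exact_mod_cast h
      have : Real.exp (-(2 * Real.pi * (n i * w.im))) ≤ Real.exp (-(2 * Real.pi * (n i * y₁))) := by
        apply Real.exp_le_exp.mpr; gcongr
      linarith [Real.exp_pos (-(2 * Real.pi * (n i * y₂)))]
    · have h' : (n i : ℝ) ≤ 0 := by exact_mod_cast h
      have : Real.exp (-(2 * Real.pi * (n i * w.im))) ≤ Real.exp (-(2 * Real.pi * (n i * y₂))) := by
        apply Real.exp_le_exp.mpr
        have := mul_le_mul_of_nonpos_left hw2.le h'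
        nlinarith
      linarith [Real.exp_pos (-(2 * Real.pi * (n i * y₁)))]

lemma root_sum (M : ℕ) (hM : 0 < M) (k : ℤ) :
    ∑ μ ∈ Finset.range M, ee ((k : ℂ) * μ / M) = if (M : ℤ) ∣ k then (M : ℂ) else 0 := by
  have hM' : (M : ℂ) ≠ 0 := by exact_mod_cast hM.ne'
  have e : ∀ μ : ℕ, ee ((k : ℂ) * μ / M) = ee ((k : ℂ) / M) ^ μ := by
    intro μ; rw [← ee_nat_mul]; congr 1; ring
  simp_rw [e]
  split_ifs with h
  · obtain ⟨j, rfl⟩ := h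
    have : ee (((M * j : ℤ) : ℂ) / M) = 1 := by
      rw [show (((M * j : ℤ) : ℂ) / M) = (j : ℂ) by push_cast; field_simp]
      exact ee_int j
    rw [this]; simp
  · have h1 : ee ((k : ℂ) / M) ≠ 1 := by
      intro h1
      rw [ee_eq_one_iff] at h1
      obtain ⟨j, hj⟩ := h1
      apply h
      refine ⟨j, ?_⟩
      rw [div_eq_iff hM'] at hj
      have : ((k : ℤ) : ℂ) = ((M * j : ℤ) : ℂ) := by push_cast; rw [hj]; ring
      exact_mod_cast this
    rw [geom_sum_eq h1, ← e, mul_div_assoc, div_self hM', mul_one, ee_int]; simp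

lemma sum_range_neg (M : ℕ) (f : ℤ → ℂ) (hf : ∀ i, f (i + M) = f i) :
    ∑ i ∈ Finset.range M, f (-(i : ℤ)) = ∑ i ∈ Finset.range M, f i := by
  rw [← Finset.sum_range_reflect]
  have : ∀ i ∈ Finset.range M, f (-((M - 1 - i : ℕ) : ℤ)) = f (((i + 1 : ℕ) : ℤ)) := by
    intro i hi
    have := Finset.mem_range.mp hi
    rw [← hf]; congr 1; omega
  rw [Finset.sum_congr rfl this]
  have h1 := Finset.sum_range_succ (fun i : ℕ => f (i : ℤ)) M
  have h2 := Finset.sum_range_succ' (fun i : ℕ => f (i : ℤ)) M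
  have h3 : f (M : ℤ) = f ((0 : ℕ) : ℤ) := by have := hf 0; simpa using this
  rw [h1, h3] at h2
  exact (add_right_cancel h2).symm

/-- The function `y/(1-y)²`. -/
def hf (v : ℂ) : ℂ := ee v / (1 - ee v) ^ 2

lemma exp_limit : Tendsto (fun u : ℂ => Complex.exp u / (1 - Complex.exp u)^2 - 1 / u^2)
    (𝓝[≠] 0) (𝓝 (-1/12)) := by
  set a : ℂ → ℂ := fun u => (Complex.exp u - 1 - u - u^2/2) / u^3 with ha
  have ha_lim : Tendsto a (𝓝[≠] 0) (𝓝 (1/6)) := by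
    rw [tendsto_iff_norm_sub_tendsto_zero]
    have hz : Tendsto (fun u : ℂ => ‖u‖ * Real.exp ‖u‖) (𝓝[≠] 0) (𝓝 0) := by
      have : Continuous (fun u : ℂ => ‖u‖ * Real.exp ‖u‖) := by fun_prop
      have := this.tendsto 0
      simp only [norm_zero, zero_mul] at this
      exact this.mono_left nhdsWithin_le_nhds
    refine squeeze_zero' (Eventually.of_forall fun u => norm_nonneg _) ?_ hz
    filter_upwards [self_mem_nhdsWithin] with u hu
    have hu : u ≠ 0 := hu
    have h := Complex.norm_exp_sub_sum_le_norm_mul_exp u 4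
    simp only [Finset.sum_range_succ, Finset.sum_range_zero, Nat.factorial] at h
    have e : a u - 1/6 = (Complex.exp u - (1 + u + u^2/2 + u^3/6)) / u^3 := by
      simp only [ha]; field_simp; ring
    rw [e, norm_div, norm_pow, div_le_iff₀ (by positivity)]
    refine le_trans (le_of_eq ?_) (h.trans (le_of_eq ?_))
    · congr 1; norm_num
    · ring
  have hid : Tendsto (fun u : ℂ => u) (𝓝[≠] 0) (𝓝 0) := tendsto_id.mono_left nhdsWithin_le_nhds
  have hnum : Tendsto (fun u => (1/2 + u * a u) - (1/4 + 2 * a u + u * a u + u^2 * (a u)^2)) (𝓝[≠] 0)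
      (𝓝 ((1/2 + 0 * (1/6)) - (1/4 + 2 * (1/6) + 0 * (1/6) + 0^2 * (1/6)^2))) := by
    exact ((hid.mul ha_lim).const_add _).sub
      ((((ha_lim.const_mul 2).const_add _).add (hid.mul ha_lim)).add ((hid.pow 2).mul (ha_lim.pow 2)))
  have hden : Tendsto (fun u => (1 + u/2 + u^2 * a u)^2) (𝓝[≠] 0) (𝓝 ((1 + 0/2 + 0^2 * (1/6))^2)) :=
    (((hid.div_const 2).const_add 1).add ((hid.pow 2).mul ha_lim)).pow 2
  have hd : Tendsto (fun u => 1 + u/2 + u^2 * a u) (𝓝[≠] 0) (𝓝 (1 + 0/2 + 0^2 * (1/6))) :=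
    (((hid.div_const 2).const_add 1).add ((hid.pow 2).mul ha_lim))
  have hq := hnum.div hden (by norm_num)
  norm_num at hq
  have e12 : (-1/12 : ℂ) = -(1/12) := by norm_num
  rw [e12]
  refine hq.congr' ?_
  have hne := hd.eventually_ne (b₂ := 0) (by norm_num)
  filter_upwards [self_mem_nhdsWithin, hne] with u hu hp
  have hu : u ≠ 0 := hu
  have hexp : Complex.exp u = 1 + u + u^2/2 + u^3 * a u := by
    simp only [ha]; field_simp; ring
  have h1 : (1 - Complex.exp u)^2 = u^2 * (1 + u/2 + u^2 * a u)^2 := by rw [hexp]; ring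
  simp only [Pi.div_apply]
  rw [h1, hexp]
  generalize a u = b at *
  obtain ⟨P, hP⟩ : ∃ P, P = 1 + u/2 + u^2 * b := ⟨_, rfl⟩
  rw [← hP] at hp ⊢
  field_simp
  rw [hP]
  ring

lemma hf_limit : Tendsto (fun z : ℂ => hf z - 1 / (2 * (Real.pi : ℂ) * Complex.I * z)^2)
    (𝓝[≠] 0) (𝓝 (-1/12)) := by
  have h2 : Tendsto (fun z : ℂ => 2 * (Real.pi : ℂ) * Complex.I * z) (𝓝[≠] 0) (𝓝[≠] 0) := by
    apply tendsto_nhdsWithin_of_tendsto_nhds_of_eventually_within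
    · have : Continuous (fun z : ℂ => 2 * (Real.pi : ℂ) * Complex.I * z) := by fun_prop
      have := this.tendsto 0
      rw [mul_zero] at this
      exact this.mono_left nhdsWithin_le_nhds
    · filter_upwards [self_mem_nhdsWithin] with z hz
      exact mul_ne_zero Complex.two_pi_I_ne_zero hz
  exact exp_limit.comp h2

lemma hf_neg (v : ℂ) : hf (-v) = hf v := by
  unfold hf
  rw [ee_neg]
  have h := ee_ne_zero v
  by_cases h1 : ee v = 1
  · simp [h1]
  · have h2 : (1 - ee v) ≠ 0 := sub_ne_zero.mpr (Ne.symm h1)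
    have h3 : (1 - (ee v)⁻¹) ≠ 0 := by
      intro h3; apply h1
      have := sub_eq_zero.mp h3
      rw [eq_comm, inv_eq_one] at this; exact this
    rw [div_eq_div_iff (pow_ne_zero _ h3) (pow_ne_zero _ h2)]
    field_simp
    ring

lemma hf_add_int (v : ℂ) (n : ℤ) : hf (v + n) = hf v := by
  unfold hf; rw [ee_add_int]

lemma norm_ee_lt_one {v : ℂ} (hv : 0 < v.im) : ‖ee v‖ < 1 := by
  rw [norm_ee]; rw [Real.exp_lt_one_iff]; have := Real.pi_pos; nlinarith [mul_pos this hv]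

lemma hf_hasSum {v : ℂ} (hv : 0 < v.im) : HasSum (fun k : ℕ => (k : ℂ) * ee (k * v)) (hf v) := by
  have := hasSum_coe_mul_geometric_of_norm_lt_one (norm_ee_lt_one hv)
  simp only [ee_nat_mul]
  exact this

lemma hf_distrib (M : ℕ) (hM : 0 < M) {z : ℂ} (hz : 0 < z.im) :
    ∑ μ ∈ Finset.range M, hf (z + μ / M) = (M:ℂ)^2 * hf (M * z) := by
  have hM' : (M : ℂ) ≠ 0 := by exact_mod_cast hM.ne'
  have h1 : HasSum (fun k : ℕ => ∑ μ ∈ Finset.range M, (k : ℂ) * ee (k * (z + μ / M)))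
      (∑ μ ∈ Finset.range M, hf (z + μ / M)) := by
    apply hasSum_sum
    intro μ _
    apply hf_hasSum
    have : ((μ : ℂ) / M).im = 0 := by
      rw [show ((μ : ℂ) / M) = ((μ / M : ℝ) : ℂ) by push_cast; rfl]; exact Complex.ofReal_im _
    simpa [this] using hz
  have h2 : HasSum (fun j : ℕ => (M : ℂ)^2 * (j * ee (j * (M * z)))) ((M:ℂ)^2 * hf (M * z)) := by
    apply HasSum.mul_left
    apply hf_hasSum
    simp [hM, hz]
  have hterm : ∀ k : ℕ, ∑ μ ∈ Finset.range M, (k : ℂ) * ee (k * (z + μ / M)) =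
      (k * ee (k * z)) * if (M : ℤ) ∣ (k : ℤ) then (M : ℂ) else 0 := by
    intro k
    rw [← root_sum M hM, Finset.mul_sum]
    apply Finset.sum_congr rfl
    intro μ _
    rw [mul_assoc, ← ee_add]; congr 2; push_cast; ring
  simp_rw [hterm] at h1
  have hinj : Function.Injective (fun j : ℕ => M * j) := fun a b h => Nat.eq_of_mul_eq_mul_left hM h
  rw [← hinj.hasSum_iff] at h1
  · refine h1.unique ?_
    convert h2 using 2 with j
    simp
    rw [show (M:ℂ) * j * z = j * (M * z) by ring]; ring
  · intro k hk
    have : ¬ (M : ℤ) ∣ (k : ℤ) := by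
      intro hd
      have := Int.natCast_dvd_natCast.mp hd
      obtain ⟨j, rfl⟩ := this
      exact hk ⟨j, rfl⟩
    simp [this]

lemma hf_zero : hf 0 = 0 := by simp [hf, ee_zero]

lemma hf_continuousAt {v : ℂ} (hv : ee v ≠ 1) : DifferentiableAt ℂ hf v := by
  unfold hf
  have h := ee_differentiable v
  refine h.div ((h.const_sub 1).pow 2) ?_
  exact pow_ne_zero _ (sub_ne_zero.mpr (Ne.symm hv))

lemma root_hf_sum (M : ℕ) (hM : 0 < M) :
    ∑ μ ∈ Finset.range M, hf (μ / M) = (1 - (M:ℂ)^2) / 12 := by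
  have hM' : (M : ℂ) ≠ 0 := by exact_mod_cast hM.ne'
  obtain ⟨P, rfl⟩ : ∃ P, M = P + 1 := ⟨M - 1, by omega⟩
  set M := P + 1
  have hl : Tendsto (fun ε : ℝ => (ε : ℂ) * Complex.I) (𝓝[>] 0) (𝓝[≠] 0) := by
    apply tendsto_nhdsWithin_of_tendsto_nhds_of_eventually_within
    · have : Continuous (fun ε : ℝ => (ε : ℂ) * Complex.I) := by fun_prop
      have := this.tendsto 0
      simp at this
      exact this.mono_left nhdsWithin_le_nhds
    · filter_upwards [self_mem_nhdsWithin] with ε hε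
      have : (ε : ℝ) ≠ 0 := ne_of_gt hε
      simpa using this
  have hmul : Tendsto (fun z : ℂ => (M : ℂ) * z) (𝓝[≠] 0) (𝓝[≠] 0) := by
    apply tendsto_nhdsWithin_of_tendsto_nhds_of_eventually_within
    · have : Continuous (fun z : ℂ => (M : ℂ) * z) := by fun_prop
      have := this.tendsto 0
      rw [mul_zero] at this
      exact this.mono_left nhdsWithin_le_nhds
    · filter_upwards [self_mem_nhdsWithin] with z hz
      exact mul_ne_zero hM' hz
  have t1 := ((hf_limit.comp hmul).comp hl).const_mul ((M:ℂ)^2)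
  have t2 := hf_limit.comp hl
  have t3 : Tendsto (fun ε : ℝ => ∑ μ ∈ Finset.range P, hf ((ε : ℂ) * Complex.I + ((μ + 1 : ℕ) : ℂ) / M)) (𝓝[>] 0)
      (𝓝 (∑ μ ∈ Finset.range P, hf (((μ + 1 : ℕ) : ℂ) / M))) := by
    apply tendsto_finsetSum
    intro μ hμ
    have hne : ee (((μ + 1 : ℕ) : ℂ) / M) ≠ 1 := by
      intro h
      rw [ee_eq_one_iff] at h
      obtain ⟨n, hn⟩ := h
      rw [div_eq_iff hM'] at hn
      have h' : ((μ + 1 : ℕ) : ℤ) = n * (M : ℤ) := by exact_mod_cast hn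
      have : (M : ℤ) ∣ ((μ + 1 : ℕ) : ℤ) := ⟨n, by rw [h']; ring⟩
      have := Nat.le_of_dvd (by omega) (Int.natCast_dvd_natCast.mp this)
      have := Finset.mem_range.mp hμ
      omega
    have hc := (hf_continuousAt hne).continuousAt
    have : Tendsto (fun ε : ℝ => (ε : ℂ) * Complex.I + ((μ + 1 : ℕ) : ℂ) / M) (𝓝[>] 0) (𝓝 (((μ + 1 : ℕ) : ℂ) / M)) := by
      have := (hl.mono_right nhdsWithin_le_nhds).add_const (((μ + 1 : ℕ) : ℂ) / M)
      simpa using this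
    exact hc.tendsto.comp this
  have t4 := t2.add t3
  have huniq := tendsto_nhds_unique (t1.congr' ?_) t4
  · rw [Finset.sum_range_succ']
    simp only [Nat.cast_zero, zero_div, hf_zero, add_zero]
    linear_combination -huniq
  · filter_upwards [self_mem_nhdsWithin] with ε hε
    have hε : 0 < ε := hε
    have hd := hf_distrib M hM (z := (ε : ℂ) * Complex.I) (by simpa using hε)
    rw [Finset.sum_range_succ'] at hd
    simp only [Nat.cast_zero, zero_div, add_zero] at hd
    simp only [Function.comp]
    have he : (ε : ℂ) ≠ 0 := by exact_mod_cast hε.ne'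
    have hpi : (Real.pi : ℂ) ≠ 0 := by exact_mod_cast Real.pi_ne_zero
    have : (M:ℂ)^2 * (1 / (2 * (Real.pi : ℂ) * Complex.I * ((M:ℂ) * ((ε : ℂ) * Complex.I)))^2) =
      1 / (2 * (Real.pi : ℂ) * Complex.I * ((ε : ℂ) * Complex.I))^2 := by
      have hI := Complex.I_ne_zero
      field_simp
    linear_combination -hd - this

/-- Terms of the Appell-Lerch sum at torsion points. -/
def dt (M K : ℕ) (N : ℤ) (μ : ℕ) (τ : ℂ) : ℂ :=
  ee ((K : ℂ) * N ^ 2 / M * τ + (K : ℂ) * N * μ / M) * hf ((N * τ + μ) / M)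

/-- The sum over `μ`. -/
def eN (M K : ℕ) (N : ℤ) (τ : ℂ) : ℂ := ∑ μ ∈ Finset.range M, dt M K N μ τ

lemma hf_bound_aux (r : ℝ) (hr : r < 1) (hr0 : 0 ≤ r) (n : ℕ) (hn : n ≠ 0) (v : ℂ) (h : ‖ee v‖ ≤ r ^ n) :
    ‖hf v‖ ≤ r ^ n / (1 - r)^2 := by
  unfold hf
  rw [norm_div, norm_pow]
  have h1 : 1 - r ≤ ‖1 - ee v‖ := by
    have h2 := norm_sub_norm_le (1:ℂ) (ee v)
    have h3 : r ^ n ≤ r := pow_le_of_le_one hr0 hr.le hn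
    rw [norm_one] at h2; linarith
  have : 0 < 1 - r := by linarith
  gcongr

lemma hf_bound (δ : ℝ) (hδ : 0 < δ) (N : ℤ) (hN : N ≠ 0) (v : ℂ) (h : δ * |(N:ℝ)| ≤ |v.im|) :
    ‖hf v‖ ≤ Real.exp (-(2 * Real.pi * δ)) ^ N.natAbs / (1 - Real.exp (-(2 * Real.pi * δ)))^2 := by
  have hpi := Real.pi_pos
  have hr : Real.exp (-(2 * Real.pi * δ)) < 1 := by
    rw [Real.exp_lt_one_iff]; have := mul_pos hpi hδ; nlinarith
  have key : ∀ v : ℂ, δ * |(N:ℝ)| ≤ v.im → ‖hf v‖ ≤ Real.exp (-(2 * Real.pi * δ)) ^ N.natAbs / (1 - Real.exp (-(2 * Real.pi * δ)))^2 := by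
    intro v h
    apply hf_bound_aux _ hr (Real.exp_pos _).le _ (by omega)
    rw [norm_ee, ← Real.exp_nat_mul]
    apply Real.exp_le_exp.mpr
    have : ((N.natAbs : ℕ) : ℝ) = |(N:ℝ)| := by rw [← Int.cast_abs, ← Nat.cast_natAbs]
    rw [this]
    nlinarith
  rcases le_total 0 v.im with h0 | h0
  · rw [abs_of_nonneg h0] at h; exact key v h
  · rw [abs_of_nonpos h0] at h
    rw [← hf_neg]; exact key (-v) (by simpa using h)

lemma arg_im (M : ℕ) (N : ℤ) (μ : ℝ) (τ : ℂ) : (((N : ℂ) * τ + (μ : ℂ)) / (M : ℂ)).im = N * τ.im / M := by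
  rw [← Complex.ofReal_natCast, Complex.div_ofReal_im]; simp

lemma dt_bound (M K : ℕ) (hM : 0 < M) (N : ℤ) (hN : N ≠ 0) (μ : ℕ) (y : ℝ) (hy : 0 < y) (τ : ℂ) (hτ : y ≤ τ.im) :
    ‖dt M K N μ τ‖ ≤ Real.exp (-(2 * Real.pi * (y / M))) ^ N.natAbs / (1 - Real.exp (-(2 * Real.pi * (y / M))))^2 := by
  have hMr : (0:ℝ) < M := by exact_mod_cast hM
  have hpi := Real.pi_pos
  unfold dt
  rw [norm_mul]
  have h1 : ‖ee ((K : ℂ) * N ^ 2 / M * τ + (K : ℂ) * N * μ / M)‖ ≤ 1 := by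
    rw [norm_ee]
    rw [Real.exp_le_one_iff]
    have e : ((K : ℂ) * N ^ 2 / M * τ + (K : ℂ) * N * μ / M) =
      ((K * N^2 / M : ℝ) : ℂ) * τ + ((K * N * μ / M : ℝ) : ℂ) := by push_cast; ring
    rw [e, Complex.add_im, Complex.im_ofReal_mul, Complex.ofReal_im, add_zero]
    have : 0 ≤ (K * N^2 / M : ℝ) * τ.im := by
      have : 0 ≤ τ.im := by linarith
      positivity
    have := mul_nonneg hpi.le this
    linarith
  have h2 := hf_bound (y / M) (by positivity) N hN ((N * τ + μ) / M) (by
    have := arg_im M N (μ : ℝ) τ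
    rw [Complex.ofReal_natCast] at this
    rw [this, abs_div, abs_mul, abs_of_pos hMr, abs_of_pos (by linarith : 0 < τ.im), div_mul_eq_mul_div]
    apply div_le_div_of_nonneg_right _ hMr.le
    rw [mul_comm]
    gcongr)
  calc _ ≤ 1 * _ := mul_le_mul h1 h2 (norm_nonneg _) zero_le_one
    _ = _ := one_mul _

lemma dt_zero (M K : ℕ) (μ : ℕ) (τ : ℂ) : dt M K 0 μ τ = hf (μ / M) := by
  simp [dt, ee_zero]

/-- summable bound -/
def uB (M : ℕ) (y : ℝ) (N : ℤ) : ℝ :=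
  (if N = 0 then ∑ μ ∈ Finset.range M, ‖hf (μ / M)‖ else 0) +
    M * (Real.exp (-(2 * Real.pi * (y / M))) ^ N.natAbs / (1 - Real.exp (-(2 * Real.pi * (y / M))))^2)

lemma summable_pow_natAbs (r : ℝ) (h0 : 0 ≤ r) (h1 : r < 1) : Summable fun N : ℤ => r ^ N.natAbs := by
  rw [summable_int_iff_summable_nat_and_neg]
  simpa using summable_geometric_of_lt_one h0 h1

lemma uB_summable (M : ℕ) (hM : 0 < M) (y : ℝ) (hy : 0 < y) : Summable (uB M y) := by
  have hMr : (0:ℝ) < M := by exact_mod_cast hM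
  apply Summable.add
  · apply summable_of_ne_finset_zero (s := {0})
    intro N hN
    simp at hN; simp [hN]
  · apply Summable.mul_left
    apply Summable.div_const
    apply summable_pow_natAbs _ (Real.exp_pos _).le
    rw [Real.exp_lt_one_iff]
    have : 0 < y / M := by positivity
    have := mul_pos Real.pi_pos this
    linarith

lemma eN_bound (M K : ℕ) (hM : 0 < M) (N : ℤ) (y : ℝ) (hy : 0 < y) (τ : ℂ) (hτ : y ≤ τ.im) :
    ‖eN M K N τ‖ ≤ uB M y N := by
  unfold eN uB
  refine (norm_sum_le _ _).trans ?_
  by_cases hN : N = 0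
  · subst hN
    simp only [dt_zero, if_true]
    apply le_add_of_nonneg_right
    positivity
  · rw [if_neg hN, zero_add]
    refine (Finset.sum_le_card_nsmul _ _ _ (fun μ _ => dt_bound M K hM N hN μ y hy τ hτ)).trans ?_
    simp

lemma dt_diff (M K : ℕ) (hM : 0 < M) (N : ℤ) (μ : ℕ) (τ : ℂ) (hτ : 0 < τ.im) :
    DifferentiableAt ℂ (dt M K N μ) τ := by
  by_cases hN : N = 0
  · subst hN
    have : dt M K 0 μ = fun _ => hf (μ / M) := by funext; exact dt_zero _ _ _ _
    rw [this]; exact differentiableAt_const _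
  · unfold dt
    have hee := ee_differentiable
    refine DifferentiableAt.mul ?_ ?_
    · exact (hee _).comp τ (by fun_prop)
    · refine DifferentiableAt.comp τ (hf_continuousAt ?_) (by fun_prop)
      intro h
      rw [ee_eq_one_iff] at h
      obtain ⟨n, hn⟩ := h
      have := arg_im M N (μ : ℝ) τ
      rw [Complex.ofReal_natCast, hn] at this
      have hMr : (M:ℝ) ≠ 0 := by exact_mod_cast hM.ne'
      have hNr : (N:ℝ) ≠ 0 := by exact_mod_cast hN
      rw [Complex.intCast_im] at this
      exact (div_ne_zero (mul_ne_zero hNr hτ.ne') hMr) this.symm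

lemma eN_diff (M K : ℕ) (hM : 0 < M) (N : ℤ) (τ : ℂ) (hτ : 0 < τ.im) :
    DifferentiableAt ℂ (eN M K N) τ := by
  unfold eN
  exact DifferentiableAt.fun_sum fun μ _ => dt_diff M K hM N μ τ hτ

lemma eN_zero (M K : ℕ) (hM : 0 < M) (τ : ℂ) : eN M K 0 τ = (1 - (M:ℂ)^2) / 12 := by
  unfold eN
  simp only [dt_zero]
  exact root_hf_sum M hM

/-- expansion coefficients -/
def cA (M K : ℕ) (N : ℤ) (k : ℕ) : ℂ := k * if (M : ℤ) ∣ (K * N + k * N.sign) then (M : ℂ) else 0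

def nA (M K : ℕ) (N : ℤ) (k : ℕ) : ℤ := N * ((K * N + k * N.sign) / M)

lemma eN_hasSum (M K : ℕ) (hM : 0 < M) (N : ℤ) (hN : N ≠ 0) (τ : ℂ) (hτ : 0 < τ.im) :
    HasSum (fun k : ℕ => cA M K N k * ee ((nA M K N k : ℂ) * τ)) (eN M K N τ) := by
  have hMr : (0:ℝ) < M := by exact_mod_cast hM
  have hM' : (M : ℂ) ≠ 0 := by exact_mod_cast hM.ne'
  have h1 : ∀ μ : ℕ, HasSum (fun k : ℕ => ee ((K : ℂ) * N ^ 2 / M * τ + (K : ℂ) * N * μ / M) *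
      (k * ee (k * (N.sign * ((N * τ + μ) / M))))) (dt M K N μ τ) := by
    intro μ
    unfold dt
    apply HasSum.mul_left
    have : hf ((N * τ + μ) / M) = hf (N.sign * ((N * τ + μ) / M)) := by
      rcases lt_or_gt_of_ne hN with h | h
      · rw [Int.sign_eq_neg_one_of_neg h]; push_cast; rw [neg_one_mul, hf_neg]
      · rw [Int.sign_eq_one_of_pos h]; simp
    rw [this]
    apply hf_hasSum
    have h2 := arg_im M N (μ : ℝ) τ
    rw [Complex.ofReal_natCast] at h2
    rw [← Complex.ofReal_intCast, Complex.im_ofReal_mul, h2]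
    have : (N.sign : ℝ) * (N * τ.im / M) = |(N:ℝ)| * τ.im / M := by
      rw [← Int.cast_abs, ← Int.sign_mul_self_eq_abs]; push_cast; ring
    rw [this]
    have : 0 < |(N:ℝ)| := abs_pos.mpr (by exact_mod_cast hN)
    positivity
  have h2 := hasSum_sum (s := Finset.range M) (fun μ _ => h1 μ)
  unfold eN
  convert h2 using 2 with k
  have e : ∀ μ ∈ Finset.range M, ee ((K : ℂ) * N ^ 2 / M * τ + (K : ℂ) * N * μ / M) *
      (k * ee (k * (N.sign * ((N * τ + μ) / M)))) =
      (k * ee (N * ((K * N + k * N.sign : ℤ) : ℂ) / M * τ)) * ee (((K * N + k * N.sign : ℤ) : ℂ) * μ / M) := by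
    intro μ _
    rw [mul_left_comm, ← ee_add, mul_assoc (k : ℂ), ← ee_add]
    congr 2; push_cast; ring
  rw [Finset.sum_congr rfl e, ← Finset.mul_sum, root_sum M hM]
  unfold cA nA
  split_ifs with h
  · obtain ⟨j, hj⟩ := h
    have hMz : (M : ℤ) ≠ 0 := by exact_mod_cast hM.ne'
    rw [hj, Int.mul_ediv_cancel_left _ hMz]
    have : (N : ℂ) * ((M * j : ℤ) : ℂ) / M = ((N * j : ℤ) : ℂ) := by push_cast; field_simp
    rw [this]; ring
  · simp

lemma eN_integral (M K : ℕ) (hM : 0 < M) (N : ℤ) (hN : N ≠ 0) (y : ℝ) (hy : 0 < y) :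
    ∫ x in (-(1/2 : ℝ))..(1/2), eN M K N (x + y * Complex.I) = 0 := by
  have h : ∀ x : ℝ, eN M K N (x + y * Complex.I) =
      ∑' k : ℕ, cA M K N k * ee ((nA M K N k : ℂ) * (x + y * Complex.I)) := by
    intro x
    exact (eN_hasSum M K hM N hN _ (by simpa using hy)).tsum_eq.symm
  simp_rw [h]
  rw [fourier_integral]
  · have : ∀ k : ℕ, (if nA M K N k = 0 then cA M K N k else 0) = 0 := by
      intro k
      split_ifs with h
      · unfold cA nA at *
        split_ifs with hd
        · obtain ⟨j, hj⟩ := hd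
          have hMz : (M : ℤ) ≠ 0 := by exact_mod_cast hM.ne'
          rw [hj, Int.mul_ediv_cancel_left _ hMz] at h
          have hj0 : j = 0 := by simpa [hN] using h
          rw [hj0, mul_zero] at hj
          have h1 : (K : ℤ) * N^2 + k * |N| = 0 := by
            rw [← Int.sign_mul_self_eq_abs]; linear_combination N * hj
          have h2 : 0 < |N| := abs_pos.mpr hN
          have h3 : (k : ℤ) * |N| = 0 := by
            have : 0 ≤ (K : ℤ) * N^2 := by positivity
            have : 0 ≤ (k : ℤ) * |N| := by positivity
            linarith
          have : k = 0 := by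
            rcases mul_eq_zero.mp h3 with h | h
            · exact_mod_cast h
            · omega
          simp [this]
        · simp
      · rfl
    simp [this]
  · have := (eN_hasSum M K hM N hN (y * Complex.I) (by simpa using hy)).summable
    exact this.norm

/-- The `λ`-part of the Appell-Lerch sum. -/
def AL (M K : ℕ) (l : ℕ) (τ : ℂ) : ℂ := ∑' s : ℤ, eN M K (s * M + l) τ

lemma shift_inj (M : ℕ) (hM : 0 < M) (l : ℕ) : Function.Injective (fun s : ℤ => s * M + (l : ℤ)) := by
  intro a b h
  simpa [hM.ne'] using h

lemma AL_integral (M K : ℕ) (hM : 0 < M) (l : ℕ) (hl : l < M) (y : ℝ) (hy : 0 < y) :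
    ∫ x in (-(1/2 : ℝ))..(1/2), AL M K l (x + y * Complex.I) =
      if l = 0 then (1 - (M:ℂ)^2) / 12 else 0 := by
  have hu : Summable fun s : ℤ => uB M y (s * M + l) := (uB_summable M hM y hy).comp_injective (shift_inj M hM l)
  have him : ∀ x : ℝ, ((x : ℂ) + y * Complex.I).im = y := by intro x; simp
  have h := intervalIntegral.hasSum_integral_of_dominated_convergence (μ := volume) (ι := ℤ) (a := -(1/2 : ℝ)) (b := 1/2)
    (F := fun s (x : ℝ) => eN M K (s * M + l) (x + y * Complex.I))
    (f := fun x : ℝ => AL M K l (x + y * Complex.I))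
    (fun s _ => uB M y (s * M + l))
    (fun s => by
      apply Continuous.aestronglyMeasurable
      rw [continuous_iff_continuousAt]
      intro x
      refine ContinuousAt.comp (g := eN M K (s * M + l)) (f := fun x : ℝ => (x : ℂ) + y * Complex.I) ?_ (by fun_prop)
      exact (eN_diff M K hM _ _ (by rw [him]; exact hy)).continuousAt)
    (fun s => by
      filter_upwards with x _
      exact eN_bound M K hM _ y hy _ (by rw [him]))
    (by filter_upwards with x _; exact hu)
    (by simp)
    (by
      filter_upwards with x _
      apply Summable.hasSum
      exact Summable.of_norm_bounded hu (fun s => eN_bound M K hM _ y hy _ (by rw [him])))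
  rw [← h.tsum_eq]
  have hterm : ∀ s : ℤ, ∫ x in (-(1/2 : ℝ))..(1/2), eN M K (s * M + l) (x + y * Complex.I) =
      if s = 0 then (if l = 0 then (1 - (M:ℂ)^2) / 12 else 0) else 0 := by
    intro s
    by_cases h0 : s * M + (l : ℤ) = 0
    · have hs : s = 0 := by
        by_contra hs
        rcases lt_or_gt_of_ne hs with h | h
        · have : s ≤ -1 := by omega
          have : s * M ≤ -1 * M := by gcongr
          omega
        · have : 0 < s * M := by positivity
          omega
      subst hs
      have hl0 : l = 0 := by simpa using h0
      subst hl0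
      simp [eN_zero M K hM]; norm_num
    · rw [eN_integral M K hM _ h0 y hy]
      split_ifs with h1 h2
      · subst h1; subst h2; simp at h0
      · rfl
      · rfl
  simp_rw [hterm]
  rw [tsum_ite_eq]

lemma AL_diff (M K : ℕ) (hM : 0 < M) (l : ℕ) :
    DifferentiableOn ℂ (AL M K l) {τ : ℂ | 1/2 < τ.im ∧ τ.im < 2} := by
  have hu : Summable fun s : ℤ => uB M (1/2) (s * M + l) :=
    (uB_summable M hM (1/2) (by norm_num)).comp_injective (shift_inj M hM l)
  unfold AL
  apply differentiableOn_tsum_of_summable_norm hu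
  · rintro s τ ⟨h1, h2⟩
    exact (eN_diff M K hM _ τ (by linarith)).differentiableWithinAt
  · exact (isOpen_lt continuous_const Complex.continuous_im).inter (isOpen_lt Complex.continuous_im continuous_const)
  · rintro s τ ⟨h1, h2⟩
    exact eN_bound M K hM _ _ (by norm_num) τ h1.le

def cP (M K : ℕ) (C : ℤ → ℤ → ℂ) (p : ℤ × ℤ) : ℂ := C (4 * ((M * K : ℕ) : ℤ) * p.1 - p.2 ^ 2) p.2

def tP (M K : ℕ) (C : ℤ → ℤ → ℂ) (l μ : ℕ) (τ : ℂ) (p : ℤ × ℤ) : ℂ :=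
  cP M K C p * ee ((p.1 + l * (p.2 + K * l) / M) * τ + (p.2 + K * l) * μ / M)

def PT (M K : ℕ) (C : ℤ → ℤ → ℂ) (l μ : ℕ) (τ : ℂ) : ℂ := ∑' p, tP M K C l μ τ p

def nP (M K : ℕ) (l : ℕ) (p : ℤ × ℤ) : ℤ := p.1 + l * ((p.2 + K * l) / M)

def aP (M K : ℕ) (C : ℤ → ℤ → ℂ) (l : ℕ) (p : ℤ × ℤ) : ℂ :=
  cP M K C p * if (M : ℤ) ∣ (p.2 + K * l) then (M : ℂ) else 0

def PL (M K : ℕ) (C : ℤ → ℤ → ℂ) (l : ℕ) (τ : ℂ) : ℂ := ∑' p, aP M K C l p * ee ((nP M K l p : ℂ) * τ)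

/-- prefactor -/
def pf (M K : ℕ) (l μ : ℤ) (τ : ℂ) : ℂ := ee (K * (l ^ 2 * τ + l * μ) / M)

lemma not_lattice (M : ℕ) (hM : 0 < M) (l μ : ℤ) (h : ¬ ((M:ℤ) ∣ l ∧ (M:ℤ) ∣ μ)) (τ : ℂ) (hτ : 0 < τ.im) :
    ∀ lam mu : ℤ, ((l : ℂ) * τ + μ) / M ≠ (lam : ℂ) * τ + (mu : ℂ) := by
  intro lam mu he
  apply h
  have hM' : (M : ℂ) ≠ 0 := by exact_mod_cast hM.ne'
  rw [div_eq_iff hM'] at he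
  have h1 := congrArg Complex.im he
  simp at h1
  have h2 : ((l : ℝ)) = lam * M := by
    apply mul_right_cancel₀ hτ.ne'; linarith
  have h3 : l = lam * M := by exact_mod_cast h2
  refine ⟨⟨lam, by rw [h3]; ring⟩, ⟨mu, ?_⟩⟩
  have : (μ : ℂ) = mu * M := by
    rw [h3] at he; push_cast at he; linear_combination he
  have h4 : μ = mu * M := by exact_mod_cast this
  rw [h4]; ring

lemma not_lattice_real (x : ℝ) (hx0 : 0 < x) (hx1 : x < 1) (τ : ℂ) (hτ : 0 < τ.im) :
    ∀ lam mu : ℤ, (x : ℂ) ≠ (lam : ℂ) * τ + (mu : ℂ) := by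
  intro lam mu he
  have h1 := congrArg Complex.im he
  simp [hτ.ne'] at h1
  rw [h1] at he
  have h2 : x = mu := by
    have := congrArg Complex.re he
    simpa using this
  rw [h2] at hx0 hx1
  have h3 : 0 < mu := by exact_mod_cast hx0
  have h4 : mu < 1 := by exact_mod_cast hx1
  omega

section
variable {M K : ℕ} {φ : ℂ → ℂ → ℂ} {C : ℤ → ℤ → ℂ}

lemma tP_hasSum (hM : 0 < M) (hC : IsFinitePartCoeffs (M * K) φ C) (l μ : ℕ)
    (h : ¬ ((M:ℤ) ∣ (l:ℤ) ∧ (M:ℤ) ∣ (μ:ℤ))) (τ : ℂ) (hτ : 0 < τ.im) :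
    HasSum (tP M K C l μ τ) (pf M K l μ τ * (φ τ ((l * τ + μ) / M) - A2sum (M * K) τ ((l * τ + μ) / M))) := by
  have hM' : (M : ℂ) ≠ 0 := by exact_mod_cast hM.ne'
  have hn := not_lattice M hM l μ h τ hτ
  simp only [Int.cast_natCast] at hn
  have h1 := (hC.2.2 τ hτ _ hn).mul_left (pf M K l μ τ)
  have e : tP M K C l μ τ = fun p : ℤ × ℤ => pf M K l μ τ * (C (4 * ((M * K : ℕ) : ℤ) * p.1 - p.2 ^ 2) p.2 *
      ee ((p.1 : ℂ) * τ + (p.2 : ℂ) * ((l * τ + μ) / M))) := by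
    funext p
    unfold tP cP pf
    rw [mul_left_comm, ← ee_add]
    congr 2
    push_cast; field_simp; ring
  rw [e]
  exact h1

lemma real_hasSum (hC : IsFinitePartCoeffs (M * K) φ C) (x : ℝ) (hx0 : 0 < x) (hx1 : x < 1) (τ : ℂ) (hτ : 0 < τ.im) :
    HasSum (fun p : ℤ × ℤ => cP M K C p * ee (p.1 * τ + p.2 * x)) (φ τ x - A2sum (M * K) τ x) :=
  hC.2.2 τ hτ x (not_lattice_real x hx0 hx1 τ hτ)

lemma norm_term (p : ℤ × ℤ) (x : ℝ) (τ : ℂ) : ‖cP M K C p * ee (p.1 * τ + p.2 * x)‖ = ‖cP M K C p * ee (p.1 * τ)‖ := by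
  rw [norm_mul, norm_mul, norm_ee, norm_ee]; simp

lemma zero_summable (hC : IsFinitePartCoeffs (M * K) φ C) (τ : ℂ) (hτ : 0 < τ.im) :
    Summable (fun p : ℤ × ℤ => ‖cP M K C p * ee (p.1 * τ)‖) := by
  have := (real_hasSum hC (1/2) (by norm_num) (by norm_num) τ hτ).summable.norm
  refine this.congr fun p => ?_
  exact norm_term p _ τ

lemma tP_zero (τ : ℂ) (p : ℤ × ℤ) : tP M K C 0 0 τ p = cP M K C p * ee (p.1 * τ) := by
  unfold tP; simp

lemma tP_summable (hM : 0 < M) (hC : IsFinitePartCoeffs (M * K) φ C) (l μ : ℕ) (hl : l < M) (hμ : μ < M)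
    (τ : ℂ) (hτ : 0 < τ.im) : Summable (tP M K C l μ τ) := by
  by_cases h : (M:ℤ) ∣ (l:ℤ) ∧ (M:ℤ) ∣ (μ:ℤ)
  · have h1 : l = 0 := Nat.eq_zero_of_dvd_of_lt (Int.natCast_dvd_natCast.mp h.1) hl
    have h2 : μ = 0 := Nat.eq_zero_of_dvd_of_lt (Int.natCast_dvd_natCast.mp h.2) hμ
    subst h1; subst h2
    refine (zero_summable hC τ hτ).of_norm.congr fun p => ?_
    exact (tP_zero τ p).symm
  · exact (tP_hasSum hM hC l μ h τ hτ).summable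

lemma PL_hasSum (hM : 0 < M) (hC : IsFinitePartCoeffs (M * K) φ C) (l : ℕ) (hl : l < M)
    (τ : ℂ) (hτ : 0 < τ.im) :
    HasSum (fun p => aP M K C l p * ee ((nP M K l p : ℂ) * τ)) (∑ μ ∈ Finset.range M, PT M K C l μ τ) := by
  have h := hasSum_sum (s := Finset.range M) (f := fun μ p => tP M K C l μ τ p)
    (fun μ hμ => (tP_summable hM hC l μ hl (Finset.mem_range.mp hμ) τ hτ).hasSum)
  have hM' : (M : ℂ) ≠ 0 := by exact_mod_cast hM.ne'
  convert h using 2 with p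
  swap
  · rfl
  unfold tP aP nP
  have e : ∀ μ ∈ Finset.range M, cP M K C p * ee ((p.1 + l * (p.2 + K * l) / M) * τ + (p.2 + K * l) * μ / M) =
      cP M K C p * ee ((p.1 + l * (p.2 + K * l) / M) * τ) * ee (((p.2 + K * l : ℤ) : ℂ) * μ / M) := by
    intro μ _
    rw [mul_assoc, ← ee_add]; push_cast; rfl
  rw [Finset.sum_congr rfl e, ← Finset.mul_sum, root_sum M hM]
  split_ifs with hd
  · obtain ⟨j, hj⟩ := hd
    have hMz : (M : ℤ) ≠ 0 := by exact_mod_cast hM.ne'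
    rw [hj, Int.mul_ediv_cancel_left _ hMz]
    have hj' : (p.2 : ℂ) + K * l = M * j := by exact_mod_cast hj
    rw [hj']
    have : (p.1 + (l:ℂ) * (M * j) / M) = ((p.1 + l * j : ℤ) : ℂ) := by push_cast; field_simp
    rw [this]; ring
  · simp

lemma PL_eq (hM : 0 < M) (hC : IsFinitePartCoeffs (M * K) φ C) (l : ℕ) (hl : l < M)
    (τ : ℂ) (hτ : 0 < τ.im) : PL M K C l τ = ∑ μ ∈ Finset.range M, PT M K C l μ τ :=
  (PL_hasSum hM hC l hl τ hτ).tsum_eq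

lemma PL_integral (hM : 0 < M) (hC : IsFinitePartCoeffs (M * K) φ C) (l : ℕ) (hl : l < M)
    (y : ℝ) (hy : 0 < y) :
    ∫ x in (-(1/2 : ℝ))..(1/2), PL M K C l (x + y * Complex.I) =
      ∑' p, if nP M K l p = 0 then aP M K C l p else 0 := by
  unfold PL
  exact fourier_integral _ _ _ (PL_hasSum hM hC l hl (y * Complex.I) (by simpa using hy)).summable.norm

lemma PL_diff (hM : 0 < M) (hC : IsFinitePartCoeffs (M * K) φ C) (l : ℕ) (hl : l < M) :
    DifferentiableOn ℂ (PL M K C l) {τ : ℂ | 1/2 < τ.im ∧ τ.im < 2} := by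
  apply series_diff
  · exact (PL_hasSum hM hC l hl (((1/2 : ℝ) : ℂ) * Complex.I) (by simp)).summable.norm
  · exact (PL_hasSum hM hC l hl (((2 : ℝ) : ℂ) * Complex.I) (by simp)).summable.norm

lemma PL_summable (hM : 0 < M) (hC : IsFinitePartCoeffs (M * K) φ C) (l : ℕ) (hl : l < M) :
    Summable fun p => if nP M K l p = 0 then aP M K C l p else 0 := by
  have h := (PL_hasSum hM hC l hl Complex.I (by simp)).summable.norm
  apply Summable.of_norm_bounded h
  intro p
  split_ifs with h0
  · rw [h0]; simp [ee_zero]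
  · rw [norm_zero]; exact norm_nonneg _

lemma dt_summable (hM : 0 < M) (l μ : ℕ) (hμ : μ < M) (τ : ℂ) (hτ : 0 < τ.im) :
    Summable fun s : ℤ => dt M K (s * M + l) μ τ := by
  have hu : Summable fun s : ℤ => uB M τ.im (s * M + l) := (uB_summable M hM _ hτ).comp_injective (shift_inj M hM l)
  apply Summable.of_norm_bounded hu
  intro s
  generalize s * M + (l:ℤ) = N
  unfold uB
  have h1 : (1:ℝ) ≤ M := by exact_mod_cast hM
  by_cases hN : N = 0
  · subst hN
    simp only [dt_zero, if_true]
    refine le_add_of_le_of_nonneg ?_ (by positivity)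
    exact Finset.single_le_sum (f := fun μ : ℕ => ‖hf (μ / M)‖) (fun _ _ => norm_nonneg _) (Finset.mem_range.mpr hμ)
  · rw [if_neg hN, zero_add]
    refine (dt_bound M K hM N hN μ τ.im hτ τ le_rfl).trans ?_
    refine le_mul_of_one_le_left (by positivity) h1

lemma A2_term (m : ℕ) (τ z : ℂ) (s : ℤ) :
    ee (((m : ℂ) * (s : ℂ) ^ 2 + (s : ℂ)) * τ + (2 * (m : ℂ) * (s : ℂ) + 1) * z) /
      (1 - ee ((s : ℂ) * τ + z)) ^ 2 = ee (m * s^2 * τ + 2 * m * s * z) * hf (s * τ + z) := by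
  unfold hf
  rw [← mul_div_assoc, ← ee_add]; congr 2; ring

lemma A2_pt (hM : 0 < M) (l μ : ℕ) (τ : ℂ) :
    pf M K l μ τ * A2sum (M * K) τ ((l * τ + μ) / M) = ∑' s : ℤ, dt M K (s * M + l) μ τ := by
  have hM' : (M : ℂ) ≠ 0 := by exact_mod_cast hM.ne'
  unfold A2sum
  rw [← tsum_mul_left]
  congr 1; ext s
  rw [A2_term]
  unfold pf dt
  rw [← mul_assoc, ← ee_add]
  have e1 : (s : ℂ) * τ + (l * τ + μ) / M = (((s * M + l : ℤ) : ℂ) * τ + μ) / M := by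
    push_cast; field_simp; ring
  rw [e1]
  congr 1
  rw [← ee_add_int _ (K * s * μ)]
  conv_lhs => rw [← ee_add_int _ (-(K * s * μ))]
  rw [← ee_add_int _ (-(K * s * μ))]
  congr 1
  push_cast; field_simp; ring

lemma AL_eq (hM : 0 < M) (l : ℕ) (τ : ℂ) (hτ : 0 < τ.im) :
    AL M K l τ = ∑ μ ∈ Finset.range M, pf M K l μ τ * A2sum (M * K) τ ((l * τ + μ) / M) := by
  simp_rw [A2_pt hM]
  unfold AL eN
  exact Summable.tsum_finsetSum fun μ hμ => dt_summable hM l μ (Finset.mem_range.mp hμ) τ hτ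

end

lemma ofReal_right : Tendsto (fun x : ℝ => (x : ℂ)) (𝓝[>] 0) (𝓝[≠] 0) := by
  apply tendsto_nhdsWithin_of_tendsto_nhds_of_eventually_within
  · exact (Complex.continuous_ofReal.tendsto' 0 0 (by simp)).mono_left nhdsWithin_le_nhds
  · filter_upwards [self_mem_nhdsWithin] with x hx
    simpa using (ne_of_gt hx : x ≠ 0)

lemma A2_limit (m : ℕ) (τ : ℂ) (hτ : 0 < τ.im) :
    Tendsto (fun x : ℝ => A2sum m τ x - 1 / (2 * (Real.pi : ℂ) * Complex.I * (x : ℂ)) ^ 2) (𝓝[>] 0)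
      (𝓝 (A2sum m τ 0 - 1 / 12)) := by
  set r := Real.exp (-(2 * Real.pi * τ.im)) with hr
  have hr1 : r < 1 := by
    rw [hr, Real.exp_lt_one_iff]; have := mul_pos Real.pi_pos hτ; nlinarith
  have hr0 : 0 ≤ r := (Real.exp_pos _).le
  have key : ∀ s : ℤ, s ≠ 0 → ∀ x : ℝ, ‖ee (m * s^2 * τ + 2 * m * s * x) * hf (s * τ + x)‖ ≤ r ^ s.natAbs / (1 - r)^2 := by
    intro s hs x
    rw [norm_mul]
    have h1 : ‖ee (m * s^2 * τ + 2 * m * s * x)‖ ≤ 1 := by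
      rw [norm_ee, Real.exp_le_one_iff]
      have : ((m : ℂ) * s^2 * τ + 2 * m * s * x).im = m * s^2 * τ.im := by
        have : ((m : ℂ) * s^2 * τ + 2 * m * s * x) = ((m * s^2 : ℝ) : ℂ) * τ + ((2 * m * s * x : ℝ) : ℂ) := by
          push_cast; ring
        rw [this]; simp only [add_im, im_ofReal_mul, ofReal_im, add_zero]
      rw [this]
      have : 0 ≤ Real.pi * (m * s^2 * τ.im) := by have := Real.pi_pos; positivity
      linarith
    have h2 := hf_bound τ.im hτ s hs (s * τ + x) (by
      simp only [add_im, ofReal_im, add_zero]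
      rw [show ((s:ℂ) * τ).im = s * τ.im by simp]
      rw [abs_mul, abs_of_pos hτ, mul_comm])
    calc _ ≤ 1 * _ := mul_le_mul_of_nonneg_right h1 (norm_nonneg _)
      _ ≤ _ := by rw [one_mul]; exact h2
  set bd : ℤ → ℝ := fun s => (if s = 0 then 1 else 0) + r ^ s.natAbs / (1 - r)^2 with hbd
  have hbs : Summable bd := by
    apply Summable.add
    · apply summable_of_ne_finset_zero (s := {0})
      intro N hN
      rw [Finset.mem_singleton] at hN; simp [hN]
    · exact (summable_pow_natAbs r hr0 hr1).div_const _
  have hpos : ∀ s : ℤ, 0 ≤ r ^ s.natAbs / (1 - r)^2 := fun s => by positivity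
  -- the modified terms
  set F : ℝ → ℤ → ℂ := fun x s => ee (m * s^2 * τ + 2 * m * s * x) * hf (s * τ + x) -
    (if s = 0 then 1 / (2 * (Real.pi : ℂ) * Complex.I * (x : ℂ)) ^ 2 else 0) with hF
  set G : ℤ → ℂ := fun s => ee (m * s^2 * τ + 2 * m * s * (0:ℝ)) * hf (s * τ + (0:ℝ)) -
    (if s = 0 then 1 / 12 else 0) with hG
  have hlim0 := hf_limit.comp ofReal_right
  have T : Tendsto (fun x => ∑' s, F x s) (𝓝[>] 0) (𝓝 (∑' s, G s)) := by
    apply tendsto_tsum_of_dominated_convergence hbs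
    · intro s
      by_cases hs : s = 0
      · subst hs
        simp only [hF, hG, if_true]
        convert hlim0 using 2
        · simp [ee_zero]
        · simp [ee_zero, hf_zero]; norm_num
      · simp only [hF, hG, if_neg hs, sub_zero]
        refine Tendsto.mono_left ?_ nhdsWithin_le_nhds
        have hc : ContinuousAt (fun x : ℝ => ee (m * s^2 * τ + 2 * m * s * (x:ℂ)) * hf (s * τ + (x:ℂ))) 0 := by
          apply ContinuousAt.mul
          · exact (ee_continuous.comp (by fun_prop)).continuousAt
          · have h1 : ContinuousAt hf ((s:ℂ) * τ + ((0:ℝ):ℂ)) := by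
              apply (hf_continuousAt _).continuousAt
              intro h
              obtain ⟨n, hn⟩ := (ee_eq_one_iff _).mp h
              have := congrArg Complex.im hn
              simp [hs, hτ.ne'] at this
            exact ContinuousAt.comp (f := fun x : ℝ => (s:ℂ) * τ + (x:ℂ)) h1 (by fun_prop)
        exact hc
    · have hev : ∀ᶠ x : ℝ in 𝓝[>] 0, ‖hf x - 1 / (2 * (Real.pi : ℂ) * Complex.I * (x:ℂ))^2‖ < 1 := by
        have := hlim0.norm.eventually_lt_const (u := 1) (by norm_num)
        exact this
      filter_upwards [hev] with x hx s
      by_cases hs : s = 0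
      · subst hs
        simp only [hF, hbd, if_true]
        have : ‖ee (m * ((0:ℤ):ℂ)^2 * τ + 2 * m * ((0:ℤ):ℂ) * x) * hf (((0:ℤ):ℂ) * τ + x) - 1 / (2 * (Real.pi : ℂ) * Complex.I * (x:ℂ))^2‖ ≤ 1 := by
          simpa [ee_zero] using hx.le
        linarith [hpos 0]
      · simp only [hF, hbd, if_neg hs, sub_zero, zero_add]
        exact key s hs x
  have hsum : ∀ x : ℝ, Summable fun s : ℤ => ee (m * s^2 * τ + 2 * m * s * x) * hf (s * τ + x) := by
    intro x
    apply Summable.of_norm_bounded_eventually (((summable_pow_natAbs r hr0 hr1).div_const ((1-r)^2)))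
    have : ∀ᶠ s : ℤ in cofinite, s ≠ 0 := by
      exact (Set.finite_singleton (0:ℤ)).compl_mem_cofinite
    filter_upwards [this] with s hs using key s hs x
  have hA : ∀ x : ℝ, A2sum m τ x = ∑' s : ℤ, ee (m * s^2 * τ + 2 * m * s * x) * hf (s * τ + x) := by
    intro x; unfold A2sum; simp_rw [A2_term]
  have hite : ∀ c : ℂ, HasSum (fun s : ℤ => if s = 0 then c else 0) c := fun c => hasSum_ite_eq 0 c
  have e1 : ∀ x, ∑' s, F x s = A2sum m τ x - 1 / (2 * (Real.pi : ℂ) * Complex.I * (x : ℂ)) ^ 2 := by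
    intro x
    rw [hA]
    exact ((hsum x).hasSum.sub (hite _)).tsum_eq
  have e2 : ∑' s, G s = A2sum m τ 0 - 1 / 12 := by
    have := hA 0
    rw [Complex.ofReal_zero] at this
    rw [this]
    have h3 := ((hsum 0).hasSum.sub (hite (1/12))).tsum_eq
    simpa [hG] using h3
  simp_rw [e1] at T
  rwa [e2] at T

section
variable {M K : ℕ} {φ : ℂ → ℂ → ℂ} {C : ℤ → ℤ → ℂ}

/-- constant term at zero -/
def G0 (M K : ℕ) (C : ℤ → ℤ → ℂ) (τ : ℂ) : ℂ := PT M K C 0 0 τ + A2sum (M * K) τ 0 - 1 / 12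

lemma Phi_limit (hC : IsFinitePartCoeffs (M * K) φ C) (τ : ℂ) (hτ : 0 < τ.im) :
    Tendsto (fun x : ℝ => φ τ x - A2sum (M * K) τ x) (𝓝[>] 0) (𝓝 (PT M K C 0 0 τ)) := by
  have T : Tendsto (fun x : ℝ => ∑' p : ℤ × ℤ, cP M K C p * ee (p.1 * τ + p.2 * x)) (𝓝[>] 0)
      (𝓝 (∑' p : ℤ × ℤ, tP M K C 0 0 τ p)) := by
    apply tendsto_tsum_of_dominated_convergence (zero_summable hC τ hτ)
    · intro p
      refine Tendsto.mono_left ?_ nhdsWithin_le_nhds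
      have hc : Continuous (fun x : ℝ => cP M K C p * ee (p.1 * τ + p.2 * x)) :=
        continuous_const.mul (ee_continuous.comp (by fun_prop))
      apply hc.tendsto'
      rw [tP_zero]; simp
    · filter_upwards with x p
      exact (norm_term p x τ).le
  refine Tendsto.congr' ?_ T
  have h1 : ∀ᶠ x : ℝ in 𝓝[>] 0, x < 1 := by
    apply eventually_nhdsWithin_of_eventually_nhds
    exact eventually_lt_nhds (by norm_num)
  filter_upwards [self_mem_nhdsWithin, h1] with x hx0 hx1
  exact (real_hasSum hC x hx0 hx1 τ hτ).tsum_eq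

lemma G0_limit (hφ : IsStandardForm (M * K) φ) (hC : IsFinitePartCoeffs (M * K) φ C) (τ : ℂ) (hτ : 0 < τ.im) :
    Tendsto (fun z : ℂ => φ τ z - 1 / (2 * (Real.pi : ℂ) * Complex.I * z) ^ 2) (𝓝[≠] 0) (𝓝 (G0 M K C τ)) := by
  obtain ⟨g, hg, hge⟩ := hφ.2.2.2 τ hτ
  have h1 : Tendsto (fun z : ℂ => φ τ z - 1 / (2 * (Real.pi : ℂ) * Complex.I * z) ^ 2) (𝓝[≠] 0) (𝓝 (g 0)) := by
    refine Tendsto.congr' (hge.mono fun z hz => hz.symm) ?_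
    exact hg.continuousAt.tendsto.mono_left nhdsWithin_le_nhds
  have h2 := h1.comp ofReal_right
  have h3 := (Phi_limit hC τ hτ).add (A2_limit (M * K) τ hτ)
  have : g 0 = G0 M K C τ := by
    refine tendsto_nhds_unique h2 ?_
    unfold G0
    rw [add_sub_assoc]
    refine h3.congr fun x => ?_
    simp only [Function.comp]; ring
  rwa [this] at h1

lemma mod_S (hφ : IsStandardForm (M * K) φ) (τ : ℂ) (hτ : 0 < τ.im) (z : ℂ) :
    φ (-1 / τ) (z / τ) = τ ^ 2 * ee (M * K * z ^ 2 / τ) * φ τ z := by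
  have := hφ.1 τ hτ z 0 (-1) 1 0 (by norm_num)
  simp only [Int.cast_zero, Int.cast_one, Int.cast_neg, zero_mul, one_mul, add_zero, zero_add, mul_one, Nat.cast_mul] at this
  rw [this]
  norm_cast

lemma im_S (τ : ℂ) (hτ : 0 < τ.im) : 0 < (-1 / τ).im := by
  have h0 : τ ≠ 0 := by rintro rfl; simp at hτ
  have : 0 < Complex.normSq τ := Complex.normSq_pos.mpr h0
  have e : (-1 / τ).im = τ.im / Complex.normSq τ := by simp [Complex.div_im]; ring
  rw [e]; positivity

lemma G0_S (hφ : IsStandardForm (M * K) φ) (hC : IsFinitePartCoeffs (M * K) φ C) (τ : ℂ) (hτ : 0 < τ.im) :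
    G0 M K C (-1 / τ) = τ ^ 2 * G0 M K C τ + (M * K / (2 * Real.pi * Complex.I)) * τ := by
  have h0 : τ ≠ 0 := by rintro rfl; simp at hτ
  have hpi : (Real.pi : ℂ) ≠ 0 := by exact_mod_cast Real.pi_ne_zero
  have hT : Tendsto (fun z : ℂ => z / τ) (𝓝[≠] 0) (𝓝[≠] 0) := by
    apply tendsto_nhdsWithin_of_tendsto_nhds_of_eventually_within
    · have : Continuous (fun z : ℂ => z / τ) := by fun_prop
      exact (this.tendsto' 0 0 (by simp)).mono_left nhdsWithin_le_nhds
    · filter_upwards [self_mem_nhdsWithin] with x hx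
      exact div_ne_zero hx h0
  have h1 := (G0_limit hφ hC (-1/τ) (im_S τ hτ)).comp hT
  have h2 := G0_limit hφ hC τ hτ
  have hE : Tendsto (fun z : ℂ => ee (M * K * z^2 / τ)) (𝓝[≠] 0) (𝓝 1) := by
    have : Continuous (fun z : ℂ => ee (M * K * z^2 / τ)) := ee_continuous.comp (by fun_prop)
    exact (this.tendsto' 0 1 (by simp [ee_zero])).mono_left nhdsWithin_le_nhds
  have hD : HasDerivAt (fun u : ℂ => ee (M * K * u / τ)) (2 * Real.pi * Complex.I * (M * K / τ)) 0 := by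
    have a1 : HasDerivAt (fun u : ℂ => 2 * (Real.pi:ℂ) * Complex.I * (M * K * u / τ)) (2 * Real.pi * Complex.I * (M * K / τ)) 0 := by
      have := (((hasDerivAt_id (0:ℂ)).const_mul ((M:ℂ) * K)).div_const τ).const_mul (2 * (Real.pi:ℂ) * Complex.I)
      simpa using this
    have := a1.cexp
    simpa [ee] using this
  have hsq : Tendsto (fun z : ℂ => z ^ 2) (𝓝[≠] 0) (𝓝[≠] 0) := by
    apply tendsto_nhdsWithin_of_tendsto_nhds_of_eventually_within
    · have : Continuous (fun z : ℂ => z ^ 2) := by fun_prop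
      exact (this.tendsto' 0 0 (by simp)).mono_left nhdsWithin_le_nhds
    · filter_upwards [self_mem_nhdsWithin] with x hx
      exact pow_ne_zero 2 hx
  have hS := (hasDerivAt_iff_tendsto_slope.mp hD).comp hsq
  have hS2 := hS.div_const ((2 * (Real.pi:ℂ) * Complex.I)^2)
  have h3 := ((hE.mul h2).add hS2).const_mul (τ^2)
  have h4 := tendsto_nhds_unique (h1.congr' ?_) h3
  · rw [h4]; field_simp
  · filter_upwards [self_mem_nhdsWithin] with z hz
    have hz : z ≠ 0 := hz
    simp only [Function.comp, slope, vsub_eq_sub, smul_eq_mul]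
    rw [mod_S hφ τ hτ]
    simp only [mul_zero, zero_div, ee_zero, sub_zero]
    field_simp
    ring

end

/-- torsion values -/
def ps (M K : ℕ) (φ : ℂ → ℂ → ℂ) (l μ : ℤ) (τ : ℂ) : ℂ :=
  if (M:ℤ) ∣ l ∧ (M:ℤ) ∣ μ then 0 else pf M K l μ τ * φ τ ((l * τ + μ) / M)

section
variable {M K : ℕ} {φ : ℂ → ℂ → ℂ} {C : ℤ → ℤ → ℂ}

lemma ps_per1 (hM : 0 < M) (hφ : IsStandardForm (M * K) φ) (l μ : ℤ) (τ : ℂ) (hτ : 0 < τ.im) :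
    ps M K φ (l + M) μ τ = ps M K φ l μ τ := by
  have hM' : (M : ℂ) ≠ 0 := by exact_mod_cast hM.ne'
  unfold ps
  have e : ((M:ℤ) ∣ l + M) ↔ (M:ℤ) ∣ l := by simp
  simp only [e]
  split_ifs
  · rfl
  · have h := hφ.2.1 τ hτ ((l * τ + μ) / M) 1 0
    have e1 : (((l + M : ℤ) : ℂ) * τ + μ) / M = (l * τ + μ) / M + ((1:ℤ):ℂ) * τ + ((0:ℤ):ℂ) := by
      push_cast; field_simp; ring
    rw [e1, h, ← mul_assoc]
    congr 1
    unfold pf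
    rw [← ee_add, ← ee_add_int _ (K * μ)]
    congr 1
    push_cast; field_simp; ring

lemma ps_per2 (hM : 0 < M) (hφ : IsStandardForm (M * K) φ) (l μ : ℤ) (τ : ℂ) (hτ : 0 < τ.im) :
    ps M K φ l (μ + M) τ = ps M K φ l μ τ := by
  have hM' : (M : ℂ) ≠ 0 := by exact_mod_cast hM.ne'
  unfold ps
  have e : ((M:ℤ) ∣ μ + M) ↔ (M:ℤ) ∣ μ := by simp
  simp only [e]
  split_ifs
  · rfl
  · have h := hφ.2.1 τ hτ ((l * τ + μ) / M) 0 1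
    have e1 : ((l : ℂ) * τ + ((μ + M : ℤ) : ℂ)) / M = (l * τ + μ) / M + ((0:ℤ):ℂ) * τ + ((1:ℤ):ℂ) := by
      push_cast; field_simp; ring
    rw [e1, h, ← mul_assoc]
    congr 1
    unfold pf
    rw [← ee_add, ← ee_add_int (K * (l ^ 2 * τ + l * μ) / M) (K * l)]
    congr 1
    push_cast; field_simp; ring

lemma ps_S (hM : 0 < M) (hφ : IsStandardForm (M * K) φ) (l μ : ℤ) (τ : ℂ) (hτ : 0 < τ.im) :
    ps M K φ l μ (-1 / τ) = τ ^ 2 * ps M K φ μ (-l) τ := by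
  have hM' : (M : ℂ) ≠ 0 := by exact_mod_cast hM.ne'
  have h0 : τ ≠ 0 := by rintro rfl; simp at hτ
  unfold ps
  have e : ((M:ℤ) ∣ l ∧ (M:ℤ) ∣ μ) ↔ ((M:ℤ) ∣ μ ∧ (M:ℤ) ∣ -l) := by
    rw [dvd_neg, and_comm]
  simp only [e]
  split_ifs
  · simp
  · have e1 : ((l : ℂ) * (-1 / τ) + μ) / M = ((μ * τ + ((-l : ℤ):ℂ)) / M) / τ := by
      push_cast; field_simp; ring
    rw [e1, mod_S hφ τ hτ]
    unfold pf
    have e2 : ee (K * (μ ^ 2 * τ + μ * ((-l : ℤ) : ℂ)) / M) = ee (K * (l ^ 2 * (-1 / τ) + l * μ) / M) *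
        ee (M * K * ((μ * τ + ((-l : ℤ):ℂ)) / M) ^ 2 / τ) := by
      rw [← ee_add]; congr 1; push_cast; field_simp; ring
    rw [e2]; ring

def Ps (M K : ℕ) (φ : ℂ → ℂ → ℂ) (τ : ℂ) : ℂ :=
  ∑ l ∈ Finset.range M, ∑ μ ∈ Finset.range M, ps M K φ (l : ℤ) (μ : ℤ) τ

lemma Ps_S (hM : 0 < M) (hφ : IsStandardForm (M * K) φ) (τ : ℂ) (hτ : 0 < τ.im) :
    Ps M K φ (-1 / τ) = τ ^ 2 * Ps M K φ τ := by
  unfold Ps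
  simp_rw [ps_S hM hφ _ _ τ hτ, ← Finset.mul_sum]
  congr 1
  rw [Finset.sum_comm]
  refine Finset.sum_congr rfl fun μ _ => ?_
  exact sum_range_neg M (fun i => ps M K φ μ i τ) (fun i => ps_per2 hM hφ μ i τ hτ)

def HH (M K : ℕ) (C : ℤ → ℤ → ℂ) (τ : ℂ) : ℂ :=
  ∑ l ∈ Finset.range M, (PL M K C l τ + AL M K l τ) - 1 / 12

lemma HH_eq (hM : 0 < M) (hC : IsFinitePartCoeffs (M * K) φ C) (τ : ℂ) (hτ : 0 < τ.im) :
    HH M K C τ = Ps M K φ τ + G0 M K C τ := by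
  unfold HH Ps
  have key : ∀ l ∈ Finset.range M, PL M K C l τ + AL M K l τ =
      ∑ μ ∈ Finset.range M, ps M K φ (l:ℤ) (μ:ℤ) τ + if l = 0 then G0 M K C τ + 1 / 12 else 0 := by
    intro l hl
    have hl' := Finset.mem_range.mp hl
    rw [PL_eq hM hC l hl' τ hτ, AL_eq hM l τ hτ, ← Finset.sum_add_distrib]
    have k2 : ∀ μ ∈ Finset.range M, PT M K C l μ τ + pf M K l μ τ * A2sum (M * K) τ ((l * τ + μ) / M) =
        ps M K φ (l:ℤ) (μ:ℤ) τ + if μ = 0 then (if l = 0 then G0 M K C τ + 1 / 12 else 0) else 0 := by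
      intro μ hμ
      have hμ' := Finset.mem_range.mp hμ
      by_cases h : (M:ℤ) ∣ (l:ℤ) ∧ (M:ℤ) ∣ (μ:ℤ)
      · have h1 : l = 0 := Nat.eq_zero_of_dvd_of_lt (Int.natCast_dvd_natCast.mp h.1) hl'
        have h2 : μ = 0 := Nat.eq_zero_of_dvd_of_lt (Int.natCast_dvd_natCast.mp h.2) hμ'
        subst h1; subst h2
        simp [ps, G0, pf, ee_zero]
      · have h3 : ¬ (μ = 0 ∧ l = 0) := by
          rintro ⟨rfl, rfl⟩; simp at h
        have h4 : (if μ = 0 then (if l = 0 then G0 M K C τ + 1 / 12 else 0) else 0) = 0 := by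
          split_ifs with a b
          · exact absurd ⟨a, b⟩ h3
          · rfl
          · rfl
        rw [h4, ps, if_neg h, PT, (tP_hasSum hM hC l μ h τ hτ).tsum_eq]
        push_cast; ring
    rw [Finset.sum_congr rfl k2, Finset.sum_add_distrib]
    congr 1
    rw [Finset.sum_ite_eq', if_pos (Finset.mem_range.mpr hM)]
  rw [Finset.sum_congr rfl key, Finset.sum_add_distrib, Finset.sum_ite_eq', if_pos (Finset.mem_range.mpr hM)]
  ring

lemma HH_S (hM : 0 < M) (hφ : IsStandardForm (M * K) φ) (hC : IsFinitePartCoeffs (M * K) φ C) (τ : ℂ) (hτ : 0 < τ.im) :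
    HH M K C (-1 / τ) = τ ^ 2 * HH M K C τ + (M * K / (2 * Real.pi * Complex.I)) * τ := by
  rw [HH_eq hM hC τ hτ, HH_eq hM hC _ (im_S τ hτ), Ps_S hM hφ τ hτ, G0_S hφ hC τ hτ]
  ring

lemma HH_integral (hM : 0 < M) (hφ : IsStandardForm (M * K) φ) (hC : IsFinitePartCoeffs (M * K) φ C) :
    ∑ l ∈ Finset.range M, ∑' p, (if nP M K l p = 0 then aP M K C l p else 0) = (M : ℂ) * (M + K) / 12 := by
  have hpi : (Real.pi : ℂ) ≠ 0 := by exact_mod_cast Real.pi_ne_zero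
  have hd : DifferentiableOn ℂ (HH M K C) {τ : ℂ | 1/2 < τ.im ∧ τ.im < 2} := by
    unfold HH
    apply DifferentiableOn.sub_const
    apply DifferentiableOn.fun_sum
    intro l hl
    exact (PL_diff hM hC l (Finset.mem_range.mp hl)).add (AL_diff M K hM l)
  have h1 := core_integral (HH M K C) _ hd (fun τ hτ => HH_S hM hφ hC τ hτ)
  set y : ℝ := Real.sqrt 3 / 2 with hy
  have hy1 : 1/2 < y := by
    rw [hy]; have : 1 < Real.sqrt 3 := by rw [Real.lt_sqrt] <;> norm_num
    linarith
  have hy2 : y < 2 := by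
    rw [hy]; have : Real.sqrt 3 < 2 := by rw [Real.sqrt_lt'] <;> norm_num
    linarith
  have hint : ∀ f : ℂ → ℂ, DifferentiableOn ℂ f {τ : ℂ | 1/2 < τ.im ∧ τ.im < 2} →
      IntervalIntegrable (fun x : ℝ => f (x + y * Complex.I)) volume (-(1/2 : ℝ)) (1/2) := by
    intro f hf
    apply Continuous.intervalIntegrable
    apply hf.continuousOn.comp_continuous (by fun_prop)
    intro x
    simpa using ⟨by simpa using hy1, hy2⟩
  unfold HH at h1
  rw [intervalIntegral.integral_sub] at h1
  · rw [intervalIntegral.integral_finsetSum] at h1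
    · have e : ∀ l ∈ Finset.range M, ∫ x in (-(1/2 : ℝ))..(1/2), (PL M K C l (x + y * Complex.I) + AL M K l (x + y * Complex.I)) =
          (∑' p, (if nP M K l p = 0 then aP M K C l p else 0)) + if l = 0 then (1 - (M:ℂ)^2) / 12 else 0 := by
        intro l hl
        have hl' := Finset.mem_range.mp hl
        rw [intervalIntegral.integral_add (hint _ (PL_diff hM hC l hl')) (hint _ (AL_diff M K hM l)),
          PL_integral hM hC l hl' y (by linarith), AL_integral M K hM l hl' y (by linarith)]
      rw [Finset.sum_congr rfl e, Finset.sum_add_distrib, Finset.sum_ite_eq', if_pos (Finset.mem_range.mpr hM)] at h1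
      have e2 : ∫ x in (-(1/2 : ℝ))..(1/2), (1/12 : ℂ) = 1/12 := by
        rw [intervalIntegral.integral_const]; norm_num
      rw [e2] at h1
      have e3 : (M:ℂ) * K / (2 * Real.pi * Complex.I) * Real.pi * Complex.I / 6 = M * K / 12 := by
        field_simp; ring
      rw [e3] at h1
      linear_combination h1
    · intro l hl
      exact (hint _ (PL_diff hM hC l (Finset.mem_range.mp hl))).add (hint _ (AL_diff M K hM l))
  · exact hint (fun τ => ∑ l ∈ Finset.range M, (PL M K C l τ + AL M K l τ)) (DifferentiableOn.fun_sum fun l hl =>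
      (PL_diff hM hC l (Finset.mem_range.mp hl)).add (AL_diff M K hM l))
  · exact intervalIntegrable_const

end

section
variable {M K : ℕ} {φ : ℂ → ℂ → ℂ} {C : ℤ → ℤ → ℂ}

/-- term after the first reindexing -/
def fR (M K : ℕ) (C : ℤ → ℤ → ℂ) (l s : ℤ) : ℂ := C (-(M * s + K * l) ^ 2) (M * s - K * l)

lemma C_per (hC : IsFinitePartCoeffs (M * K) φ C) (Δ l k : ℤ) : C Δ (l + 2 * (M * K) * k) = C Δ l := by
  induction k using Int.induction_on with
  | zero => simp
  | succ i ih =>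
    rw [← ih, ← hC.1 Δ (l + 2 * (M * K) * i)]; congr 1; push_cast; ring
  | pred i ih =>
    rw [← ih, ← hC.1]; congr 1; push_cast; ring

lemma step_inj (hM : 0 < M) (l : ℕ) : Function.Injective (fun s : ℤ => ((-(l * s), M * s - K * l) : ℤ × ℤ)) := by
  intro s s' h
  have hMz : (M : ℤ) ≠ 0 := by exact_mod_cast hM.ne'
  have h2 := (Prod.ext_iff.mp h).2
  simp only at h2
  exact mul_left_cancel₀ hMz (by linarith)

lemma step_val (hM : 0 < M) (l : ℕ) (s : ℤ) :
    (if nP M K l (-(l * s), M * s - K * l) = 0 then aP M K C l (-(l * s), M * s - K * l) else 0) = M * fR M K C l s := by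
  have hMz : (M : ℤ) ≠ 0 := by exact_mod_cast hM.ne'
  have e : (M * s - K * l + K * l : ℤ) = M * s := by ring
  have h0 : nP M K l (-(l * s), M * s - K * l) = 0 := by
    unfold nP
    simp only
    rw [e, Int.mul_ediv_cancel_left _ hMz]; ring
  rw [if_pos h0]
  unfold aP cP fR
  simp only
  rw [e, if_pos (dvd_mul_right _ _), mul_comm]
  congr 2
  push_cast; ring

lemma step_supp (hM : 0 < M) (l : ℕ) (p : ℤ × ℤ)
    (hp : (if nP M K l p = 0 then aP M K C l p else 0) ≠ 0) :
    p ∈ Set.range (fun s : ℤ => ((-(l * s), M * s - K * l) : ℤ × ℤ)) := by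
  have hMz : (M : ℤ) ≠ 0 := by exact_mod_cast hM.ne'
  split_ifs at hp with h0
  · unfold aP at hp
    split_ifs at hp with hd
    · obtain ⟨s, hs⟩ := hd
      refine ⟨s, ?_⟩
      unfold nP at h0
      rw [hs, Int.mul_ediv_cancel_left _ hMz] at h0
      ext
      · simp only; linarith
      · simp only; linarith
    · simp at hp
  · simp at hp

lemma step_tsum (hM : 0 < M) (l : ℕ) :
    ∑' p, (if nP M K l p = 0 then aP M K C l p else 0) = M * ∑' s : ℤ, fR M K C l s := by
  rw [← (step_inj (K := K) hM l).tsum_eq (f := fun p => if nP M K l p = 0 then aP M K C l p else 0)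
    (fun p hp => step_supp hM l p hp)]
  rw [← tsum_mul_left]
  exact tsum_congr fun s => step_val hM l s

lemma fR_summable (hM : 0 < M) (hC : IsFinitePartCoeffs (M * K) φ C) (l : ℕ) (hl : l < M) :
    Summable fun s : ℤ => fR M K C l s := by
  have hM' : (M : ℂ) ≠ 0 := by exact_mod_cast hM.ne'
  have h := (PL_summable hM hC l hl).comp_injective (step_inj (K := K) hM l)
  have h2 : Summable fun s : ℤ => (M : ℂ) * fR M K C l s := by
    refine h.congr fun s => ?_
    exact step_val hM l s
  exact (summable_mul_left_iff hM').mp h2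

lemma step2 (hM : 0 < M) (hK : 0 < K) (hC : IsFinitePartCoeffs (M * K) φ C) :
    ∑ l ∈ Finset.range M, ∑' s : ℤ, fR M K C l s = Rfactor (M * K) C M K := by
  obtain ⟨t, ht⟩ : ∃ t, t = Nat.gcd M K := ⟨_, rfl⟩
  have ht0 : 0 < t := by rw [ht]; exact Nat.gcd_pos_of_pos_left _ hM
  obtain ⟨a, ha⟩ : ∃ a, a = M / t := ⟨_, rfl⟩
  obtain ⟨b, hb⟩ : ∃ b, b = K / t := ⟨_, rfl⟩
  have hMa : M = t * a := by rw [ha, Nat.mul_div_cancel' (ht ▸ Nat.gcd_dvd_left M K)]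
  have hKb : K = t * b := by rw [hb, Nat.mul_div_cancel' (ht ▸ Nat.gcd_dvd_right M K)]
  have hab : Nat.gcd a b = 1 := by
    rw [ha, hb, ht]; exact Nat.coprime_div_gcd_div_gcd (ht ▸ ht0)
  have ha0 : 0 < a := Nat.pos_of_ne_zero (by rintro rfl; simp at hMa; omega)
  obtain ⟨x, hx⟩ : ∃ x, x = Nat.gcdA a b := ⟨_, rfl⟩
  obtain ⟨y, hy⟩ : ∃ y, y = Nat.gcdB a b := ⟨_, rfl⟩
  have hxy : (a : ℤ) * x + b * y = 1 := by
    have := Nat.gcd_eq_gcd_ab a b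
    rw [hab] at this
    rw [hx, hy, ← this]; rfl
  have hMz : (M : ℤ) = t * a := by exact_mod_cast hMa
  have hKz : (K : ℤ) = t * b := by exact_mod_cast hKb
  have htz : (0:ℤ) < t := by exact_mod_cast ht0
  have haz : (0:ℤ) < a := by exact_mod_cast ha0
  have hMpos : (0:ℤ) < M := by exact_mod_cast hM
  -- the map
  let S : ℤ × Fin t → ℤ := fun q => x * q.1 + b * (q.2 : ℕ)
  let L : ℤ × Fin t → ℤ := fun q => y * q.1 - a * (q.2 : ℕ)
  have hLlt : ∀ q, (L q % M).toNat < M := by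
    intro q
    have := Int.emod_lt_of_pos (L q) hMpos
    have := Int.emod_nonneg (L q) hMpos.ne'
    omega
  have hLc : ∀ q, (((L q % M).toNat : ℕ) : ℤ) = L q % M := fun q => Int.toNat_of_nonneg (Int.emod_nonneg (L q) hMpos.ne')
  let e : ℤ × Fin t → Fin M × ℤ := fun q => (⟨(L q % M).toNat, hLlt q⟩, S q + K * (L q / M))
  have hdm : ∀ q, L q % M = L q - M * (L q / M) := fun q => by
    have := Int.emod_add_mul_ediv (L q) M; linarith
  have hrho : ∀ q, (M:ℤ) * S q + K * L q = t * q.1 := by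
    intro q
    simp only [S, L]
    rw [hMz, hKz]
    linear_combination (t * q.1 : ℤ) * hxy
  have hsum1 : ∀ q, (M:ℤ) * (e q).2 + K * ((e q).1 : ℕ) = t * q.1 := by
    intro q
    simp only [e]
    rw [hLc, hdm, ← hrho]; ring
  have hbij : Function.Bijective e := by
    constructor
    · intro q q' h
      have h1 : q.1 = q'.1 := by
        have := hsum1 q
        rw [h, hsum1 q'] at this
        exact (mul_left_cancel₀ htz.ne' this).symm
      have h2 : L q % M = L q' % M := by
        have := congrArg (fun w => (((w.1 : Fin M) : ℕ) : ℤ)) h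
        simp only [e] at this
        rwa [hLc, hLc] at this
      have h3 : (M : ℤ) ∣ L q - L q' := (Int.emod_emod_of_dvd _ (dvd_refl _) ▸ Int.emod_eq_emod_iff_emod_sub_eq_zero.mp h2 |> Int.dvd_of_emod_eq_zero)
      have h4 : (t : ℤ) ∣ ((q'.2 : ℕ) : ℤ) - ((q.2 : ℕ) : ℤ) := by
        obtain ⟨w, hw⟩ := h3
        refine ⟨w, ?_⟩
        simp only [L, h1] at hw
        rw [hMz] at hw
        apply mul_left_cancel₀ haz.ne'
        linear_combination hw
      have h5 : ((q'.2 : ℕ) : ℤ) - ((q.2 : ℕ) : ℤ) = 0 := by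
        apply Int.eq_zero_of_abs_lt_dvd h4
        have := q.2.2; have := q'.2.2
        rw [abs_lt]; omega
      ext
      · exact h1
      · omega
    · rintro ⟨l, s⟩
      have hl := l.2
      set k : ℤ := y * s - x * (l : ℕ) with hk
      have hj0 := Int.emod_nonneg k htz.ne'
      have hj1 := Int.emod_lt_of_pos k htz
      have hjc : (((k % t).toNat : ℕ) : ℤ) = k - t * (k / t) := by
        rw [Int.toNat_of_nonneg hj0]; have := Int.emod_add_mul_ediv k t; linarith
      refine ⟨(a * s + b * (l : ℕ), ⟨(k % t).toNat, by omega⟩), ?_⟩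
      have hL : L (a * s + b * (l : ℕ), ⟨(k % t).toNat, by omega⟩) = (l : ℕ) + M * (k / t) := by
        simp only [L]
        rw [hjc, hMz]
        linear_combination ((l : ℕ) : ℤ) * hxy - a * hk
      have hS : S (a * s + b * (l : ℕ), ⟨(k % t).toNat, by omega⟩) = s - K * (k / t) := by
        simp only [S]
        rw [hjc, hKz]
        linear_combination s * hxy + b * hk
      have hlz : (((l : ℕ) : ℤ)) < M := by exact_mod_cast hl
      have hl0 : (0:ℤ) ≤ ((l : ℕ) : ℤ) := by positivity
      have hm1 : (((l : ℕ) : ℤ) + M * (k / t)) % M = (l : ℕ) := by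
        rw [Int.add_mul_emod_self_left, Int.emod_eq_of_lt hl0 hlz]
      have hm2 : (((l : ℕ) : ℤ) + M * (k / t)) / M = k / t := by
        rw [Int.add_mul_ediv_left _ _ hMpos.ne', Int.ediv_eq_zero_of_lt hl0 hlz, zero_add]
      simp only [e]
      ext
      · simp only [hL, hm1]; simp
      · simp only [hL, hS, hm2]; ring
  have h2m : 2 * ((M * K : ℕ) : ℤ) / (t : ℤ) ^ 2 = 2 * a * b := by
    push_cast
    rw [hMz, hKz, show (2 * (t * a * (t * b)) : ℤ) = t ^ 2 * (2 * a * b) by ring, Int.mul_ediv_cancel_left _ (by positivity)]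
  let F : Fin M × ℤ → ℂ := fun w => fR M K C (w.1 : ℕ) w.2
  have hFs : Summable F := by
    apply Summable.of_norm
    rw [summable_prod_of_nonneg (fun _ => norm_nonneg _)]
    exact ⟨fun w => (fR_summable hM hC w w.2).norm, Summable.of_finite⟩
  have hval : ∀ q : ℤ × Fin t, F (e q) = C (-(q.1 ^ 2) * (t:ℤ)^2)
      ((lstar a b q.1 + 2 * ((M * K : ℕ) : ℤ) / (t : ℤ) ^ 2 * ((q.2 : ℕ) : ℤ)) * (t : ℤ)) := by
    intro q
    simp only [F, fR]
    rw [hsum1, ← C_per hC _ _ (-(L q / M)), h2m]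
    have e1 : -((t:ℤ) * q.1) ^ 2 = -(q.1 ^ 2) * (t:ℤ)^2 := by ring
    rw [e1]
    congr 1
    simp only [e]
    rw [hLc, hdm]
    have e2 : (M : ℤ) * S q - K * L q = (lstar a b q.1 + 2 * a * b * ((q.2 : ℕ) : ℤ)) * (t : ℤ) := by
      simp only [S, L, lstar]
      rw [hMz, hKz, ← hx, ← hy]; ring
    rw [← e2]; ring
  have hleft : ∑ l ∈ Finset.range M, ∑' s : ℤ, fR M K C l s = ∑' w, F w := by
    rw [hFs.tsum_prod, tsum_fintype, Finset.sum_range]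
  have hright : ∑' q, F (e q) = Rfactor (M * K) C M K := by
    have hs2 : Summable fun q => F (e q) := hFs.comp_injective hbij.1
    rw [hs2.tsum_prod]
    unfold Rfactor
    refine tsum_congr fun ρ => ?_
    rw [tsum_fintype]
    unfold CoeffU
    rw [← ht, Finset.sum_range, ← ha, ← hb]
    exact Finset.sum_congr rfl fun j _ => hval (ρ, j)
  rw [hleft, ← hright]
  exact ((Equiv.ofBijective e hbij).tsum_eq F).symm

end

theorem main_aux (M K : ℕ) (hM : 0 < M) (hK : 0 < K) (φ : ℂ → ℂ → ℂ) (hφ : IsStandardForm (M * K) φ)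
    (C : ℤ → ℤ → ℂ) (hC : IsFinitePartCoeffs (M * K) φ C) :
    Rfactor (M * K) C M K = ((M : ℂ) + (K : ℂ)) / 12 := by
  have hM' : (M : ℂ) ≠ 0 := by exact_mod_cast hM.ne'
  have h := HH_integral hM hφ hC
  simp_rw [step_tsum hM] at h
  rw [← Finset.mul_sum, step2 hM hK hC] at h
  apply mul_left_cancel₀ hM'
  rw [h]; ring

/-- Theorem: for every standard index-`m` form `φ` with finite part `Φ = φ - A_{2,m}`
(coefficient data `C`), and every unordered factorization `m = m₁·m₂`, one has
`R_{m₁,m₂}(Φ) = (m₁ + m₂)/12`. -/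
theorem residues_of_finite_part (m : ℕ) (hm : 0 < m)
    (φ : ℂ → ℂ → ℂ) (hφ : IsStandardForm m φ)
    (C : ℤ → ℤ → ℂ) (hC : IsFinitePartCoeffs m φ C) :
    ∀ m₁ m₂ : ℕ, m₁ * m₂ = m → Rfactor m C m₁ m₂ = ((m₁ : ℂ) + (m₂ : ℂ)) / 12 := by
  intro m₁ m₂ h
  subst h
  exact main_aux m₁ m₂ (Nat.pos_of_mul_pos_right hm) (Nat.pos_of_mul_pos_left hm) φ hφ C hC
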